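/- arXiv:2412.10944 — 10 statements merged into one kernel-verified Lean document; each statement's English description precedes it below -/
import Mathlib

section
/- The sequential sum diversity function OSD is not ordered-submodular: there exist a finite set of items, a nonnegative symmetric distance function d with zero diagonal, continuation probabilities in [0, 1], finite sequences X and Y, and items s and s̄ such that OSD(X‖s) − OSD(X) < OSD(X‖s‖Y) − OSD(X‖s̄‖Y). -/
/-!
A single item has zero diversity, so with `X` empty the left-hand gain `OSD(s) - OSD()` is `0`.
The right-hand side is `OSD(s, y) - OSD(sbar, y)`, which is positive as soon as `sbar` stops the user
with certainty while `s` and `y` are at positive distance and are always accepted. Three distinct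
items `s = 0`, `y = 1`, `sbar = 2` under the discrete metric realise this, with value `2 - 0`.
-/

open Finset

/-- `Pr_S(k)`: probability that the user accepts exactly the first `k` items of `L`. -/
noncomputable def seqProb {ι : Type*} (p : ι → ℝ) (L : List ι) (k : ℕ) : ℝ :=
  ((L.take k).map p).prod * (if h : k < L.length then 1 - p (L.get ⟨k, h⟩) else 1)

/-- `Σ_i Σ_j d(u_i, u_j)` over all (ordered) pairs of positions of the list `L`. -/
noncomputable def pairSum {ι : Type*} (d : ι → ι → ℝ) (L : List ι) : ℝ :=
  (L.map (fun u => ((L.map (fun v => d u v)).sum))).sum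

/-- Sequential sum diversity of a sequence:
`OSD(S) = Σ_{k=1}^{m} Pr_S(k) · (Σ_{i=1}^{k} Σ_{j=1}^{k} d(u_i,u_j))`. -/
noncomputable def OSDL {ι : Type*} (d : ι → ι → ℝ) (p : ι → ℝ) (L : List ι) : ℝ :=
  ∑ k ∈ Finset.Icc 1 L.length, seqProb p L k * pairSum d (L.take k)

/-- the sequential sum diversity function is not ordered-submodular. -/
theorem stmt_2 :
    ∃ (m : ℕ) (d : Fin m → Fin m → ℝ) (p : Fin m → ℝ)
      (Xs Ys : List (Fin m)) (s sbar : Fin m),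
      (∀ u v, 0 ≤ d u v) ∧ (∀ u v, d u v = d v u) ∧ (∀ u, d u u = 0) ∧
      (∀ u, 0 ≤ p u ∧ p u ≤ 1) ∧
      OSDL d p (Xs ++ [s]) - OSDL d p Xs <
        OSDL d p (Xs ++ s :: Ys) - OSDL d p (Xs ++ sbar :: Ys) := by
  refine ⟨3, fun u v => if u = v then 0 else 1, fun u => if u = 2 then 0 else 1,
    [], [1], 0, 2, ?_, ?_, ?_, ?_, ?_⟩
  · intro u v
    dsimp only
    split_ifs <;> norm_num
  · intro u v
    simp only [eq_comm]
  · intro u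
    simp
  · intro u
    dsimp only
    split_ifs <;> norm_num
  · have h2 : Finset.Icc 1 2 = ({1, 2} : Finset ℕ) := by decide
    simp [OSDL, seqProb, pairSum, h2]
end

section
/- Suppose the continuation probabilities are uniform: p_i = p for all i, with 0 < p < 1, and let α ∈ (0, 1]. If a permutation π satisfies OHP(π) ≥ α · OHP(π′) for every permutation π′, then it satisfies OSD(π) ≥ (α/2) · OSD(π′) for every permutation π′. -/
/-!
Write `S_j = ∑_{t<j} d(x_j, x_t)` for the star at position `j` of an ordering `x` and
`L_j = ∑_{t<j} d(x_t, x_{t+1})` for the length of its path up to position `j`. When all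
continuation probabilities equal `p`, exchanging summations gives `OSD = ∑ p^j S_j` and
`OHP = ∑ p^j L_j` with the same weights, so the two objectives can be compared position by position.

* Going through `x_j`, the triangle inequality gives `L_j ≤ 2 S_j` (`path_le_two_star`), hence
  `OHP ≤ 2 OSD` for every ordering.
* If an ordering maximises `OSD`, then swapping positions `j` and `j+1` does not increase `OSD`.
  This swap changes `OSD` by `p^j (1 - p) (∑_{t<j} d(x_{j+1}, x_t) - S_j)`, so
  `S_{j+1} ≤ S_j + d(x_j, x_{j+1})` (`star_succ_le`), and `S_j ≤ L_j` by induction: a maximiser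
  of `OSD` has `OSD ≤ OHP`.

Therefore, with `σ` a maximiser of `OSD`,
`α OSD(π') ≤ α OSD(σ) ≤ α OHP(σ) ≤ OHP(π) ≤ 2 OSD(π)`.
-/

open Finset

/-- Prefix probability: product of continuation probabilities of the first `k` items
(0-based positions `0,…,k−1`) of the ordering `π`. -/
noncomputable def Pprefix (p : ℕ → ℝ) (π : ℕ → ℕ) (k : ℕ) : ℝ :=
  ∏ t ∈ Finset.range k, p (π t)

/-- Sequential sum diversity `OSD(π) = Σ_{i=1}^{n−1} P_π(i+1)·(Σ_{t=1}^{i} d(π(i+1),π(t)))`,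
written with 0-based positions. -/
noncomputable def OSD (n : ℕ) (d : ℕ → ℕ → ℝ) (p : ℕ → ℝ) (π : ℕ → ℕ) : ℝ :=
  ∑ i ∈ Finset.range (n - 1),
    Pprefix p π (i + 2) * ∑ t ∈ Finset.range (i + 1), d (π (i + 1)) (π t)

/-- `W_π(i) = Σ_{j=i+1}^{n} P_π(j)`, with `i` a 0-based position (paper position `i+1`). -/
noncomputable def Wcoef (n : ℕ) (p : ℕ → ℝ) (π : ℕ → ℕ) (i : ℕ) : ℝ :=
  ∑ j ∈ Finset.Icc (i + 2) n, Pprefix p π j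

/-- Ordered Hamiltonian path objective
`OHP(π) = Σ_{i=1}^{n−1} W_π(i)·d(π(i),π(i+1))`, written with 0-based positions. -/
noncomputable def OHP (n : ℕ) (d : ℕ → ℕ → ℝ) (p : ℕ → ℝ) (π : ℕ → ℕ) : ℝ :=
  ∑ i ∈ Finset.range (n - 1), Wcoef n p π i * d (π i) (π (i + 1))

/-- `π` is a permutation of the item set `U = {0,…,n−1}`. -/
def IsPermOn (n : ℕ) (π : ℕ → ℕ) : Prop :=
  Set.BijOn π (Set.Iio n) (Set.Iio n)

/-- The sum of the distances from the item in (0-based) position `i + 1` to all earlier items. -/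
noncomputable def starSum (d : ℕ → ℕ → ℝ) (π : ℕ → ℕ) (i : ℕ) : ℝ :=
  ∑ t ∈ Finset.range (i + 1), d (π (i + 1)) (π t)

/-- The length of the path through the items in (0-based) positions `0, …, i + 1`. -/
noncomputable def pathLen (d : ℕ → ℕ → ℝ) (π : ℕ → ℕ) (i : ℕ) : ℝ :=
  ∑ t ∈ Finset.range (i + 1), d (π t) (π (t + 1))

lemma OSD_uniform (n : ℕ) (d : ℕ → ℕ → ℝ) (p : ℝ) (π : ℕ → ℕ) :
    OSD n d (fun _ => p) π = ∑ i ∈ Finset.range (n - 1), p ^ (i + 2) * starSum d π i := by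
  simp [OSD, Pprefix, starSum]

lemma OHP_uniform (n : ℕ) (d : ℕ → ℕ → ℝ) (p : ℝ) (π : ℕ → ℕ) :
    OHP n d (fun _ => p) π = ∑ i ∈ Finset.range (n - 1), p ^ (i + 2) * pathLen d π i := by
  have hW : ∀ i, Wcoef n (fun _ => p) π i = ∑ m ∈ Finset.Ico i (n - 1), p ^ (m + 2) := by
    intro i
    simp only [Wcoef, Pprefix, Finset.prod_const, Finset.card_range]
    symm
    refine Finset.sum_bij (fun m _ => m + 2) ?_ ?_ ?_ ?_
    · intro m hm
      simp only [Finset.mem_Ico, Finset.mem_Icc] at hm ⊢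
      omega
    · intro a _ b _ h
      omega
    · intro b hb
      simp only [Finset.mem_Icc] at hb
      exact ⟨b - 2, by simp only [Finset.mem_Ico]; omega, by omega⟩
    · intros
      rfl
  simp only [OHP, hW, pathLen, Finset.sum_mul, Finset.mul_sum]
  apply Finset.sum_comm'
  intro x y
  simp only [Finset.mem_range, Finset.mem_Ico]
  omega

lemma IsPermOn.lt {n : ℕ} {π : ℕ → ℕ} (h : IsPermOn n π) {i : ℕ} (hi : i < n) : π i < n :=
  h.mapsTo hi

/-- The path up to an item is at most twice the star at that item: replace each step of the path by
a detour through the centre of the star. -/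
lemma path_le_two_star {n : ℕ} {d : ℕ → ℕ → ℝ}
    (hd_nonneg : ∀ u < n, ∀ v < n, 0 ≤ d u v)
    (hd_symm : ∀ u < n, ∀ v < n, d u v = d v u)
    (hd_diag : ∀ u < n, d u u = 0)
    (hd_tri : ∀ u < n, ∀ v < n, ∀ w < n, d u w ≤ d u v + d v w)
    {π : ℕ → ℕ} (hπ : IsPermOn n π) {i : ℕ} (hi : i + 1 < n) :
    pathLen d π i ≤ 2 * starSum d π i := by
  have h1 : pathLen d π i ≤
      ∑ t ∈ Finset.range (i + 1), (d (π (i + 1)) (π t) + d (π (i + 1)) (π (t + 1))) := by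
    refine Finset.sum_le_sum fun t ht => ?_
    have ht' : t < i + 1 := Finset.mem_range.1 ht
    have hx := hπ.lt hi
    have ha : π t < n := hπ.lt (by omega)
    have hb : π (t + 1) < n := hπ.lt (by omega)
    have := hd_tri _ ha _ hx _ hb
    rwa [hd_symm _ ha _ hx] at this
  -- The shifted sum of spokes loses a nonnegative first term and gains a zero last term.
  have h2 := Finset.sum_range_succ (fun t => d (π (i + 1)) (π t)) (i + 1)
  rw [Finset.sum_range_succ', hd_diag _ (hπ.lt hi)] at h2
  have h3 : 0 ≤ d (π (i + 1)) (π 0) := hd_nonneg _ (hπ.lt hi) _ (hπ.lt (by omega))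
  rw [Finset.sum_add_distrib] at h1
  simp only [starSum]
  linarith

lemma IsPermOn.comp_swap {n : ℕ} {π : ℕ → ℕ} (h : IsPermOn n π) {a b : ℕ} (ha : a < n)
    (hb : b < n) : IsPermOn n (π ∘ Equiv.swap a b) := by
  refine Set.BijOn.comp h ?_
  have hm : Set.MapsTo (Equiv.swap a b) (Set.Iio n) (Set.Iio n) := by
    intro x hx
    simp only [Set.mem_Iio, Equiv.swap_apply_def] at hx ⊢
    split_ifs <;> assumption
  refine ⟨hm, (Equiv.injective _).injOn, fun x hx => ⟨Equiv.swap a b x, hm hx, ?_⟩⟩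
  simp

/-- Effect on `OSD` of swapping the items in positions `k + 1` and `k + 2`. -/
lemma OSD_swap {n : ℕ} {d : ℕ → ℕ → ℝ}
    (hd_symm : ∀ u < n, ∀ v < n, d u v = d v u) (p : ℝ)
    {π : ℕ → ℕ} (hπ : IsPermOn n π) {k : ℕ} (hk : k + 2 < n) :
    OSD n d (fun _ => p) (π ∘ Equiv.swap (k + 1) (k + 2)) - OSD n d (fun _ => p) π =
      p ^ (k + 2) * (1 - p) *
        (∑ t ∈ Finset.range (k + 1), d (π (k + 2)) (π t) - starSum d π k) := by
  set s := Equiv.swap (k + 1) (k + 2) with hs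
  have hfix : ∀ t, t ≠ k + 1 → t ≠ k + 2 → s t = t := fun t h h' =>
    Equiv.swap_apply_of_ne_of_ne h h'
  have hs1 : s (k + 1) = k + 2 := Equiv.swap_apply_left _ _
  have hs2 : s (k + 2) = k + 1 := Equiv.swap_apply_right _ _
  have hinit : ∀ x, ∑ t ∈ Finset.range (k + 1), d x (π (s t)) =
      ∑ t ∈ Finset.range (k + 1), d x (π t) := by
    intro x
    refine Finset.sum_congr rfl fun t ht => ?_
    have := Finset.mem_range.1 ht
    rw [hfix t (by omega) (by omega)]
  rw [OSD_uniform, OSD_uniform, ← Finset.sum_sub_distrib,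
    Finset.sum_eq_add k (k + 1) (by omega)]
  · have e1 : starSum d (π ∘ s) k = ∑ t ∈ Finset.range (k + 1), d (π (k + 2)) (π t) := by
      simp only [starSum, Function.comp, hs1, hinit]
    have e2 : starSum d (π ∘ s) (k + 1) = starSum d π k + d (π (k + 1)) (π (k + 2)) := by
      simp only [starSum, Function.comp]
      rw [Finset.sum_range_succ, hinit, hs1, hs2]
    have e3 : starSum d π (k + 1) =
        ∑ t ∈ Finset.range (k + 1), d (π (k + 2)) (π t) + d (π (k + 1)) (π (k + 2)) := by
      simp only [starSum]
      rw [Finset.sum_range_succ,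
        hd_symm _ (hπ.lt (show k + 1 < n by omega)) _ (hπ.lt hk)]
    rw [e1, e2, e3]
    ring
  · intro c _ hc
    suffices h : starSum d (π ∘ s) c = starSum d π c by rw [h, sub_self]
    simp only [starSum, Function.comp]
    rw [hfix (c + 1) (by omega) (by omega)]
    -- Either `c < k` and no summand moves, or `c > k + 1` and `s` permutes the index set.
    rcases lt_or_gt_of_ne hc.1 with h | h
    · refine Finset.sum_congr rfl fun t ht => ?_
      have := Finset.mem_range.1 ht
      rw [hfix t (by omega) (by omega)]
    · refine Finset.sum_equiv s (fun t => ?_) (fun _ _ => rfl)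
      simp only [Finset.mem_range, hs, Equiv.swap_apply_def]
      split_ifs <;> omega
  · intro h
    exact absurd (Finset.mem_range.2 (by omega)) h
  · intro h
    exact absurd (Finset.mem_range.2 (by omega)) h

/-- Local optimality of a maximiser of `OSD` under adjacent swaps. -/
lemma star_succ_le {n : ℕ} {d : ℕ → ℕ → ℝ}
    (hd_symm : ∀ u < n, ∀ v < n, d u v = d v u) {p : ℝ} (hp0 : 0 < p) (hp1 : p < 1)
    {σ : ℕ → ℕ} (hσ : IsPermOn n σ)
    (hmax : ∀ π', IsPermOn n π' → OSD n d (fun _ => p) π' ≤ OSD n d (fun _ => p) σ)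
    {k : ℕ} (hk : k + 2 < n) :
    starSum d σ (k + 1) ≤ starSum d σ k + d (σ (k + 1)) (σ (k + 2)) := by
  have h1 := hmax _ (hσ.comp_swap (show k + 1 < n by omega) hk)
  have h2 := OSD_swap hd_symm p hσ hk
  have hc : 0 < p ^ (k + 2) * (1 - p) := mul_pos (pow_pos hp0 _) (by linarith)
  have h3 : ∑ t ∈ Finset.range (k + 1), d (σ (k + 2)) (σ t) ≤ starSum d σ k := by
    by_contra! h
    have := mul_pos hc (sub_pos.2 h)
    linarith
  have e3 : starSum d σ (k + 1) =
      ∑ t ∈ Finset.range (k + 1), d (σ (k + 2)) (σ t) + d (σ (k + 2)) (σ (k + 1)) := by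
    simp only [starSum]
    rw [Finset.sum_range_succ]
  rw [e3, hd_symm _ (hσ.lt hk) _ (hσ.lt (show k + 1 < n by omega))]
  linarith

lemma star_le_path {n : ℕ} {d : ℕ → ℕ → ℝ}
    (hd_symm : ∀ u < n, ∀ v < n, d u v = d v u) {p : ℝ} (hp0 : 0 < p) (hp1 : p < 1)
    {σ : ℕ → ℕ} (hσ : IsPermOn n σ)
    (hmax : ∀ π', IsPermOn n π' → OSD n d (fun _ => p) π' ≤ OSD n d (fun _ => p) σ)
    (i : ℕ) (hi : i + 1 < n) : starSum d σ i ≤ pathLen d σ i := by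
  induction i with
  | zero =>
    simp only [starSum, pathLen, zero_add, Finset.sum_range_one]
    exact (hd_symm _ (hσ.lt hi) _ (hσ.lt (by omega))).le
  | succ k ih =>
    have h1 := star_succ_le hd_symm hp0 hp1 hσ hmax hi
    have h2 := ih (by omega)
    have h3 : pathLen d σ (k + 1) = pathLen d σ k + d (σ (k + 1)) (σ (k + 2)) := by
      simp only [pathLen]
      rw [Finset.sum_range_succ]
    linarith

/-- `OSD` attains its maximum: it only depends on the values of an ordering on `{0, …, n - 1}`,
and there are finitely many maps from this set to itself. -/
lemma exists_OSD_max (n : ℕ) (d : ℕ → ℕ → ℝ) (p : ℝ) {π : ℕ → ℕ} (hπ : IsPermOn n π) :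
    ∃ σ, IsPermOn n σ ∧
      ∀ π', IsPermOn n π' → OSD n d (fun _ => p) π' ≤ OSD n d (fun _ => p) σ := by
  classical
  let F : (Fin n → Fin n) → ℕ → ℕ := fun g i => if h : i < n then g ⟨i, h⟩ else i
  have key : ∀ π', IsPermOn n π' → ∃ g, IsPermOn n (F g) ∧
      OSD n d (fun _ => p) (F g) = OSD n d (fun _ => p) π' := by
    intro π' h'
    let g : Fin n → Fin n := fun i => ⟨π' i, h'.lt i.2⟩
    have hg : ∀ i < n, F g i = π' i := fun i hi => by simp [F, g, hi]
    refine ⟨g, Set.BijOn.congr h' fun i hi => (hg i hi).symm, ?_⟩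
    rw [OSD_uniform, OSD_uniform]
    refine Finset.sum_congr rfl fun i hi => ?_
    have hi' := Finset.mem_range.1 hi
    congr 1
    refine Finset.sum_congr rfl fun t ht => ?_
    have ht' := Finset.mem_range.1 ht
    rw [hg _ (by omega), hg _ (by omega)]
  obtain ⟨g₀, hg₀, -⟩ := key π hπ
  obtain ⟨g, hg, hmax⟩ := Finset.exists_max_image
    (Finset.univ.filter fun g => IsPermOn n (F g)) (fun g => OSD n d (fun _ => p) (F g))
    ⟨g₀, by simpa using hg₀⟩
  refine ⟨F g, (Finset.mem_filter.1 hg).2, fun π' h' => ?_⟩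
  obtain ⟨g', hg', he⟩ := key π' h'
  rw [← he]
  exact hmax g' (by simpa using hg')

/-- with uniform continuation probabilities, an `α`-approximate solution
of `OHP` is an `(α/2)`-approximate solution of `OSD`. -/
theorem stmt_4 (n : ℕ) (hn : 2 ≤ n) (d : ℕ → ℕ → ℝ)
    (hd_nonneg : ∀ u < n, ∀ v < n, 0 ≤ d u v)
    (hd_symm : ∀ u < n, ∀ v < n, d u v = d v u)
    (hd_diag : ∀ u < n, d u u = 0)
    (hd_tri : ∀ u < n, ∀ v < n, ∀ w < n, d u w ≤ d u v + d v w)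
    (p : ℝ) (hp0 : 0 < p) (hp1 : p < 1)
    (α : ℝ) (hα0 : 0 < α) (hα1 : α ≤ 1)
    (π : ℕ → ℕ) (hπ : IsPermOn n π)
    (hopt : ∀ π', IsPermOn n π' →
      α * OHP n d (fun _ => p) π' ≤ OHP n d (fun _ => p) π) :
    ∀ π', IsPermOn n π' →
      α / 2 * OSD n d (fun _ => p) π' ≤ OSD n d (fun _ => p) π := by
  intro π' hπ'
  obtain ⟨σ, hσ, hmax⟩ := exists_OSD_max n d p hπ
  have h1 : OSD n d (fun _ => p) σ ≤ OHP n d (fun _ => p) σ := by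
    rw [OSD_uniform, OHP_uniform]
    refine Finset.sum_le_sum fun i hi => mul_le_mul_of_nonneg_left ?_ (pow_pos hp0 _).le
    have := Finset.mem_range.1 hi
    exact star_le_path hd_symm hp0 hp1 hσ hmax i (by omega)
  have h2 : OHP n d (fun _ => p) π ≤ 2 * OSD n d (fun _ => p) π := by
    rw [OSD_uniform, OHP_uniform, Finset.mul_sum]
    refine Finset.sum_le_sum fun i hi => ?_
    have := Finset.mem_range.1 hi
    rw [mul_left_comm]
    exact mul_le_mul_of_nonneg_left
      (path_le_two_star hd_nonneg hd_symm hd_diag hd_tri hπ (by omega)) (pow_pos hp0 _).le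
  have h3 := mul_le_mul_of_nonneg_left ((hmax π' hπ').trans h1) hα0.le
  have h4 := hopt σ hσ
  linarith
end

section
/- Let t be an integer with 2 ≤ t ≤ n, suppose the continuation probabilities are uniform with p_i = p = 1 − 1/t for all i, and let ℓ_t be the maximum over all sequences (v_1, …, v_t) of t distinct items of U of Σ_{i=1}^{t−1} d(v_i, v_{i+1}). Let T = ⌊(t−1)/2⌋ and suppose the permutation π satisfies: (P1) d(π(2i−1), π(2i)) ≥ d(π(2i+1), π(2i+2)) for every i ≥ 1 with 2i+2 ≤ n; (P2) d(π(2i), π(2i+1)) ≥ (1/2) · d(π(2i−1), π(2i)) for every i ≥ 1 with 2i+1 ≤ n; and (P3) Σ_{i=1}^{T} d(π(2i−1), π(2i)) ≥ (1/4) · ((t−2)/(t−1)) · ℓ_t. Then OHP(π) ≥ p^t · (1 − p^t) · (3/16 − 1/(8t)) · ((t−2)/(t−1)) · OHP(π′) for every permutation π′. (This is the quantitative form of the asymptotic (3(e−1)/(16e²) − Θ(1/t_n))-approximation guarantee of the greedy-matching algorithm.) -/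
/-!
Write `L = t - 1` for the number of edges on a path with `t` vertices, and `a k` for the
length of the `k`-th edge of an ordering (0-based).

*Upper bound for `π'`.* Each coefficient is a geometric sum, so `W(k) ≤ t p^(k+2)`
(`Wcoef_const_le`). Any `L` consecutive edges of `π'` lie on a path through `t` distinct items and
hence have total length at most `ℓ` (`window_le`). Cutting the edges into consecutive blocks of
size `L` gives `(1 - p^L) ∑ p^k a k ≤ ℓ` (`block_sum_le`). Bernoulli's inequality gives
`p^L ≤ 1/2`, whence `p^2 (1 - p^t) ≤ 1 - p^L`, and so `(1 - p^t) OHP(π') ≤ t ℓ` (`OHP_upper`).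

*Lower bound for `π`.* For `k < t` one has `W(k) ≥ (t - 1 - k) p^t` (`le_Wcoef_const`). Let `e m` be
the length of the `m`-th matching edge, joining positions `2m` and `2m + 1`. By (P2) the edge after it
has length at least `e m / 2`, so the first `2T` edges contribute at least
`p^t ∑ (3t/2 - 3m - 2) e m`. Both factors decrease in `m` by (P1), so a Chebyshev sum inequality
(`chebyshev_centered`) bounds this below by `p^t (3t/4 - 1/2) ∑ e m`. Finally (P3)
compares `∑ e m` with `ℓ`.
-/

open Finset

theorem Pprefix_const (p : ℝ) (π : ℕ → ℕ) (k : ℕ) : Pprefix (fun _ => p) π k = p ^ k := by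
  simp [Pprefix]

theorem Wcoef_const_le {n : ℕ} {t p : ℝ} (ht : 0 < t) (hp0 : 0 ≤ p) (hp : p = 1 - 1 / t)
    (π : ℕ → ℕ) (i : ℕ) : Wcoef n (fun _ => p) π i ≤ t * p ^ (i + 2) := by
  simp only [Wcoef, Pprefix_const]
  rcases Nat.lt_or_ge n (i + 2) with h | h
  · rw [Finset.Icc_eq_empty (by omega)]
    simp only [Finset.sum_empty]
    positivity
  · have e : Finset.Icc (i + 2) n = Finset.Ico (i + 2) (n + 1) := by
      ext x; simp only [Finset.mem_Icc, Finset.mem_Ico]; omega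
    have g := geom_sum_Ico_mul_neg p (m := i + 2) (n := n + 1) (by omega)
    rw [← e] at g
    have h1 : 1 - p = 1 / t := by rw [hp]; ring
    have h2 : 0 ≤ p ^ (n + 1) := by positivity
    rw [h1, mul_one_div, div_eq_iff ht.ne'] at g
    nlinarith

theorem Wcoef_const_nonneg {n : ℕ} {p : ℝ} (hp0 : 0 ≤ p) (π : ℕ → ℕ) (i : ℕ) :
    0 ≤ Wcoef n (fun _ => p) π i := by
  simp only [Wcoef, Pprefix_const]
  exact Finset.sum_nonneg fun _ _ => by positivity

/-- Keep only the terms `p ^ j` with `j ≤ t` and bound each of them below by `p ^ t`. -/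
theorem le_Wcoef_const {n t : ℕ} {p : ℝ} (hp0 : 0 ≤ p) (hp1 : p ≤ 1) (htn : t ≤ n)
    (π : ℕ → ℕ) {i : ℕ} (hi : i + 1 ≤ t) :
    ((t : ℝ) - 1 - i) * p ^ t ≤ Wcoef n (fun _ => p) π i := by
  simp only [Wcoef, Pprefix_const]
  calc ((t : ℝ) - 1 - i) * p ^ t = ∑ j ∈ Finset.Icc (i + 2) t, p ^ t := by
        rw [Finset.sum_const, Nat.card_Icc, nsmul_eq_mul]
        congr 1
        have : t + 1 - (i + 2) = t - (i + 1) := by omega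
        rw [this, Nat.cast_sub hi]
        push_cast
        ring
    _ ≤ ∑ j ∈ Finset.Icc (i + 2) t, p ^ j :=
        Finset.sum_le_sum fun j hj =>
          pow_le_pow_of_le_one hp0 hp1 (Finset.mem_Icc.1 hj).2
    _ ≤ ∑ j ∈ Finset.Icc (i + 2) n, p ^ j :=
        Finset.sum_le_sum_of_subset_of_nonneg (Finset.Icc_subset_Icc le_rfl htn)
          fun _ _ _ => by positivity

/-- If every window of `L` consecutive terms of `a` sums to at most `ℓ`, then the discounted sum
over `N` blocks of length `L` is dominated by the geometric series `ℓ ∑ (p ^ L) ^ b`. -/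
theorem block_sum_le {p ℓ : ℝ} (hp0 : 0 ≤ p) (hp1 : p ≤ 1) {L : ℕ} {a : ℕ → ℝ}
    (ha : ∀ k, 0 ≤ a k) (hw : ∀ s, ∑ j ∈ Finset.range L, a (s + j) ≤ ℓ) (N : ℕ) :
    (1 - p ^ L) * ∑ k ∈ Finset.range (L * N), p ^ k * a k ≤ ℓ * (1 - (p ^ L) ^ N) := by
  induction N with
  | zero => simp
  | succ N ih =>
    rw [Nat.mul_succ, Finset.sum_range_add]
    have hb : ∑ j ∈ Finset.range L, p ^ (L * N + j) * a (L * N + j) ≤ (p ^ L) ^ N * ℓ := by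
      calc ∑ j ∈ Finset.range L, p ^ (L * N + j) * a (L * N + j)
          ≤ ∑ j ∈ Finset.range L, (p ^ L) ^ N * a (L * N + j) := by
            refine Finset.sum_le_sum fun j _ => mul_le_mul_of_nonneg_right ?_ (ha _)
            rw [← pow_mul]
            exact pow_le_pow_of_le_one hp0 hp1 (by omega)
        _ = (p ^ L) ^ N * ∑ j ∈ Finset.range L, a (L * N + j) := by rw [Finset.mul_sum]
        _ ≤ _ := mul_le_mul_of_nonneg_left (hw _) (by positivity)
    have h1 : 0 ≤ 1 - p ^ L := sub_nonneg.2 (pow_le_one₀ hp0 hp1)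
    have := mul_le_mul_of_nonneg_left hb h1
    rw [pow_succ]
    nlinarith

/-- A window of `t - 1` edges of an ordering, where edges beyond the last position count as `0`,
is no longer than a path on `t` distinct items. -/
theorem window_le {n t : ℕ} (ht1 : 1 ≤ t) (htn : t ≤ n) {d : ℕ → ℕ → ℝ}
    (hd_nonneg : ∀ u < n, ∀ v < n, 0 ≤ d u v) {ℓ : ℝ}
    (hℓ : ∀ σ : ℕ → ℕ, Set.InjOn σ (Set.Iio t) → Set.MapsTo σ (Set.Iio t) (Set.Iio n) →
      ∑ i ∈ Finset.range (t - 1), d (σ i) (σ (i + 1)) ≤ ℓ)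
    {π : ℕ → ℕ} (hπ : IsPermOn n π) (s : ℕ) :
    ∑ j ∈ Finset.range (t - 1),
      (if s + j < n - 1 then d (π (s + j)) (π (s + j + 1)) else 0) ≤ ℓ := by
  -- a window overhanging the end is moved back to the last full window, which starts at `n - t`
  obtain ⟨u, hu⟩ : ∃ u, u = min s (n - t) := ⟨_, rfl⟩
  have hmap : ∀ x, x < n → π x < n := fun x hx => hπ.mapsTo hx
  have hmain := hℓ (fun i => π (u + i))
    (fun x hx y hy h => by
      simp only [Set.mem_Iio] at hx hy
      have := hπ.injOn (show u + x ∈ Set.Iio n by simp only [Set.mem_Iio]; omega)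
        (show u + y ∈ Set.Iio n by simp only [Set.mem_Iio]; omega) h
      omega)
    (fun x hx => by
      simp only [Set.mem_Iio] at hx ⊢
      exact hmap _ (by omega))
  refine le_trans ?_ hmain
  have hshift : ∀ v, ∀ f : ℕ → ℝ, ∑ j ∈ Finset.range (t - 1), f (v + j) =
      ∑ k ∈ Finset.Ico v (v + (t - 1)), f k := fun v f => by
    rw [Finset.sum_Ico_eq_sum_range, Nat.add_sub_cancel_left]
  have e1 := hshift s (fun k => if k < n - 1 then d (π k) (π (k + 1)) else 0)
  have e2 := hshift u (fun k => d (π k) (π (k + 1)))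
  simp only [← add_assoc] at e1 e2 ⊢
  rw [e1, e2, ← Finset.sum_filter]
  refine Finset.sum_le_sum_of_subset_of_nonneg ?_ ?_
  · intro k hk
    simp only [Finset.mem_filter, Finset.mem_Ico] at hk ⊢
    omega
  · intro k hk _
    simp only [Finset.mem_Ico] at hk
    exact hd_nonneg _ (hmap _ (by omega)) _ (hmap _ (by omega))

/-- Bernoulli's inequality applied to `1 / p = 1 + 1 / (t - 1)`. -/
theorem pow_pred_le_half {t : ℕ} (ht2 : 2 ≤ t) {p : ℝ} (hp0 : 0 ≤ p)
    (hp : p = 1 - 1 / (t : ℝ)) : p ^ (t - 1) ≤ 1 / 2 := by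
  obtain ⟨L, rfl⟩ : ∃ L, t = L + 1 := ⟨t - 1, by omega⟩
  have hL : (0 : ℝ) < L := by exact_mod_cast (by omega : 0 < L)
  have hL0 := hL.ne'
  have hq : p * (1 + 1 / (L : ℝ)) = 1 := by
    rw [hp]; push_cast; field_simp; ring
  have hB := one_add_mul_le_pow (a := 1 / (L : ℝ))
    (by have : (0 : ℝ) ≤ 1 / L := by positivity
        linarith) L
  rw [mul_one_div_cancel hL0] at hB
  have h1 : p ^ L * (1 + 1 / (L : ℝ)) ^ L = 1 := by rw [← mul_pow, hq, one_pow]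
  have h2 : 0 ≤ p ^ L := by positivity
  rw [Nat.add_sub_cancel]
  nlinarith

theorem OHP_upper {n t : ℕ} (ht2 : 2 ≤ t) (htn : t ≤ n) {d : ℕ → ℕ → ℝ}
    (hd_nonneg : ∀ u < n, ∀ v < n, 0 ≤ d u v) {p : ℝ} (hp0 : 0 ≤ p) (hp1 : p ≤ 1)
    (hp : p = 1 - 1 / (t : ℝ)) {ℓ : ℝ} (hℓ0 : 0 ≤ ℓ)
    (hℓ : ∀ σ : ℕ → ℕ, Set.InjOn σ (Set.Iio t) → Set.MapsTo σ (Set.Iio t) (Set.Iio n) →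
      ∑ i ∈ Finset.range (t - 1), d (σ i) (σ (i + 1)) ≤ ℓ)
    {π : ℕ → ℕ} (hπ : IsPermOn n π) :
    (1 - p ^ t) * OHP n d (fun _ => p) π ≤ t * ℓ := by
  have ht0 : (0 : ℝ) < t := by exact_mod_cast (by omega : 0 < t)
  have hmap : ∀ x, x < n → π x < n := fun x hx => hπ.mapsTo hx
  obtain ⟨a, ha⟩ : ∃ a : ℕ → ℝ,
    a = fun k => if k < n - 1 then d (π k) (π (k + 1)) else 0 := ⟨_, rfl⟩
  have ha0 : ∀ k, 0 ≤ a k := fun k => by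
    rw [ha]; dsimp only; split_ifs with h
    · exact hd_nonneg _ (hmap _ (by omega)) _ (hmap _ (by omega))
    · exact le_rfl
  have hw : ∀ s, ∑ j ∈ Finset.range (t - 1), a (s + j) ≤ ℓ := fun s => by
    rw [ha]; exact window_le (by omega) htn hd_nonneg hℓ hπ s
  have hblock := block_sum_le hp0 hp1 ha0 hw (n - 1)
  set F := ∑ k ∈ Finset.range ((t - 1) * (n - 1)), p ^ k * a k with hF
  have hF0 : 0 ≤ F := Finset.sum_nonneg fun k _ => mul_nonneg (by positivity) (ha0 k)
  have hO : OHP n d (fun _ => p) π ≤ t * p ^ 2 * F := by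
    calc OHP n d (fun _ => p) π
        ≤ ∑ k ∈ Finset.range (n - 1), t * p ^ 2 * (p ^ k * a k) := by
          refine Finset.sum_le_sum fun k hk => ?_
          have hk' := Finset.mem_range.1 hk
          have : a k = d (π k) (π (k + 1)) := by rw [ha]; simp [hk']
          rw [← this]
          calc _ ≤ t * p ^ (k + 2) * a k :=
                mul_le_mul_of_nonneg_right (Wcoef_const_le ht0 hp0 hp π k) (ha0 k)
            _ = _ := by ring
      _ = t * p ^ 2 * ∑ k ∈ Finset.range (n - 1), p ^ k * a k := by rw [Finset.mul_sum]
      _ ≤ t * p ^ 2 * F := by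
          refine mul_le_mul_of_nonneg_left ?_ (by positivity)
          refine Finset.sum_le_sum_of_subset_of_nonneg ?_
            fun k _ _ => mul_nonneg (by positivity) (ha0 k)
          exact Finset.range_mono (Nat.le_mul_of_pos_left _ (by omega))
  have hhalf := pow_pred_le_half ht2 hp0 hp
  have hpt : p ^ t = p ^ (t - 1) * p := by rw [← pow_succ]; congr 1; omega
  have hx0 : 0 ≤ p ^ (t - 1) := by positivity
  have hpt1 : p ^ t ≤ 1 := pow_le_one₀ hp0 hp1
  have hN0 : 0 ≤ (p ^ (t - 1)) ^ (n - 1) := by positivity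
  -- `p (1 - p^t) ≤ 1 - p^(t-1)` rearranges to `(1 - p) (1 - p^(t-1) (1 + p)) ≥ 0`
  have hkey : p ^ 2 * (1 - p ^ t) ≤ 1 - p ^ (t - 1) := by
    have h1 : p * (1 - p ^ t) ≤ 1 - p ^ (t - 1) := by
      rw [hpt]
      nlinarith [mul_nonneg (sub_nonneg.2 hp1)
        (show (0 : ℝ) ≤ 1 - p ^ (t - 1) * (1 + p) by nlinarith)]
    have h2 : p ^ 2 * (1 - p ^ t) ≤ p * (1 - p ^ t) :=
      mul_le_mul_of_nonneg_right (by nlinarith) (by linarith)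
    linarith
  calc (1 - p ^ t) * OHP n d (fun _ => p) π
      ≤ (1 - p ^ t) * (t * p ^ 2 * F) := mul_le_mul_of_nonneg_left hO (by linarith)
    _ = t * ((p ^ 2 * (1 - p ^ t)) * F) := by ring
    _ ≤ t * ((1 - p ^ (t - 1)) * F) := by gcongr
    _ ≤ t * ℓ := by
        refine mul_le_mul_of_nonneg_left ?_ ht0.le
        nlinarith [mul_nonneg hℓ0 hN0]

/-- Chebyshev's sum inequality against the centred arithmetic progression
`T - 1, T - 3, …, 1 - T`. -/
theorem chebyshev_centered {e : ℕ → ℝ} (T : ℕ)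
    (he : ∀ m, m + 1 < T → e (m + 1) ≤ e m) :
    0 ≤ ∑ m ∈ Finset.range T, ((T : ℝ) - 1 - 2 * m) * e m := by
  induction T with
  | zero => simp
  | succ T ih =>
    have ih' := ih fun m hm => he m (by omega)
    have hlast : ∀ j, j ≤ T → e T ≤ e (T - j) := by
      intro j
      induction j with
      | zero => simp
      | succ j ihj =>
        intro hj
        have h := he (T - (j + 1)) (by omega)
        rw [show T - (j + 1) + 1 = T - j by omega] at h
        exact (ihj (by omega)).trans h
    have hsum : ∑ m ∈ Finset.range T, e T ≤ ∑ m ∈ Finset.range T, e m := by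
      refine Finset.sum_le_sum fun m hm => ?_
      have hm' := Finset.mem_range.1 hm
      have h := hlast (T - m) (by omega)
      rwa [show T - (T - m) = m by omega] at h
    rw [Finset.sum_const, Finset.card_range, nsmul_eq_mul] at hsum
    have hsplit : ∑ m ∈ Finset.range T, (((T + 1 : ℕ) : ℝ) - 1 - 2 * m) * e m =
        ∑ m ∈ Finset.range T, ((T : ℝ) - 1 - 2 * m) * e m + ∑ m ∈ Finset.range T, e m := by
      rw [← Finset.sum_add_distrib]
      refine Finset.sum_congr rfl fun m _ => ?_
      push_cast; ring
    rw [Finset.sum_range_succ, hsplit]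
    push_cast
    linarith

theorem sum_range_two_mul (f : ℕ → ℝ) (T : ℕ) :
    ∑ k ∈ Finset.range (2 * T), f k = ∑ m ∈ Finset.range T, (f (2 * m) + f (2 * m + 1)) := by
  induction T with
  | zero => simp
  | succ T ih =>
    rw [Nat.mul_succ, Finset.sum_range_succ, Finset.sum_range_succ, ih,
      Finset.sum_range_succ (n := T), add_assoc]

theorem OHP_lower {n t T : ℕ} (htn : t ≤ n) (hT : 2 * T + 1 ≤ t) {d : ℕ → ℕ → ℝ}
    (hd_nonneg : ∀ u < n, ∀ v < n, 0 ≤ d u v) {p : ℝ} (hp0 : 0 ≤ p) (hp1 : p ≤ 1)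
    {π : ℕ → ℕ} (hπ : IsPermOn n π)
    (hP1 : ∀ m, m + 1 < T →
      d (π (2 * (m + 1))) (π (2 * (m + 1) + 1)) ≤ d (π (2 * m)) (π (2 * m + 1)))
    (hP2 : ∀ m, m < T →
      1 / 2 * d (π (2 * m)) (π (2 * m + 1)) ≤ d (π (2 * m + 1)) (π (2 * m + 1 + 1))) :
    p ^ t * ((3 / 4 * t - 1 / 2) * ∑ m ∈ Finset.range T, d (π (2 * m)) (π (2 * m + 1))) ≤
      OHP n d (fun _ => p) π := by
  have hmap : ∀ x, x < n → π x < n := fun x hx => hπ.mapsTo hx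
  have hW := Wcoef_const_nonneg (n := n) hp0 π
  have hd0 : ∀ k, k + 1 < n → 0 ≤ d (π k) (π (k + 1)) := fun k hk =>
    hd_nonneg _ (hmap _ (by omega)) _ (hmap _ hk)
  have hpt : 0 ≤ p ^ t := by positivity
  have hcheb := chebyshev_centered (e := fun m => d (π (2 * m)) (π (2 * m + 1))) T hP1
  have hS : 0 ≤ ∑ m ∈ Finset.range T, d (π (2 * m)) (π (2 * m + 1)) :=
    Finset.sum_nonneg fun m hm => hd0 _ (by have := Finset.mem_range.1 hm; omega)
  have hTt : 2 * (T : ℝ) + 1 ≤ t := by exact_mod_cast hT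
  calc p ^ t * ((3 / 4 * t - 1 / 2) * ∑ m ∈ Finset.range T, d (π (2 * m)) (π (2 * m + 1)))
      ≤ p ^ t * ∑ m ∈ Finset.range T,
          (3 / 2 * (t : ℝ) - 3 * m - 2) * d (π (2 * m)) (π (2 * m + 1)) := by
        refine mul_le_mul_of_nonneg_left ?_ hpt
        have hsplit : ∑ m ∈ Finset.range T,
            (3 / 2 * (t : ℝ) - 3 * m - 2) * d (π (2 * m)) (π (2 * m + 1)) =
            3 / 2 * ∑ m ∈ Finset.range T, ((T : ℝ) - 1 - 2 * m) * d (π (2 * m)) (π (2 * m + 1)) +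
            (3 / 2 * (t : ℝ) - 3 / 2 * T - 1 / 2) *
              ∑ m ∈ Finset.range T, d (π (2 * m)) (π (2 * m + 1)) := by
          rw [Finset.mul_sum, Finset.mul_sum, ← Finset.sum_add_distrib]
          exact Finset.sum_congr rfl fun m _ => by ring
        rw [hsplit]
        have : (3 / 4 * (t : ℝ) - 1 / 2) * ∑ m ∈ Finset.range T, d (π (2 * m)) (π (2 * m + 1)) ≤
            (3 / 2 * (t : ℝ) - 3 / 2 * T - 1 / 2) *
              ∑ m ∈ Finset.range T, d (π (2 * m)) (π (2 * m + 1)) :=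
          mul_le_mul_of_nonneg_right (by linarith) hS
        linarith
    _ ≤ ∑ m ∈ Finset.range T,
          (Wcoef n (fun _ => p) π (2 * m) * d (π (2 * m)) (π (2 * m + 1)) +
           Wcoef n (fun _ => p) π (2 * m + 1) * d (π (2 * m + 1)) (π (2 * m + 1 + 1))) := by
        rw [Finset.mul_sum]
        refine Finset.sum_le_sum fun m hm => ?_
        have hm' := Finset.mem_range.1 hm
        have h0 := hd0 (2 * m) (by omega)
        have w1 := le_Wcoef_const hp0 hp1 htn π (i := 2 * m) (by omega)
        have w2 := le_Wcoef_const hp0 hp1 htn π (i := 2 * m + 1) (by omega)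
        push_cast at w1 w2
        have a1 := mul_le_mul_of_nonneg_right w1 h0
        have a2 := mul_le_mul_of_nonneg_right w2 (show 0 ≤ 1 / 2 * d (π (2 * m)) (π (2 * m + 1)) by
          positivity)
        have a3 := mul_le_mul_of_nonneg_left (hP2 m hm') (hW (2 * m + 1))
        linarith
    _ = ∑ k ∈ Finset.range (2 * T), Wcoef n (fun _ => p) π k * d (π k) (π (k + 1)) :=
        (sum_range_two_mul
          (fun k => Wcoef n (fun _ => p) π k * d (π k) (π (k + 1))) T).symm
    _ ≤ OHP n d (fun _ => p) π := by
        refine Finset.sum_le_sum_of_subset_of_nonneg (Finset.range_mono (by omega)) ?_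
        intro k hk _
        have hk' := Finset.mem_range.1 hk
        exact mul_nonneg (hW k) (hd0 k (by omega))

/-- quantitative guarantee of the greedy-matching algorithm, for uniform
probability `p = 1 − 1/t`. -/
theorem stmt_6 (n t : ℕ) (hn : 2 ≤ n) (ht2 : 2 ≤ t) (htn : t ≤ n)
    (d : ℕ → ℕ → ℝ)
    (hd_nonneg : ∀ u < n, ∀ v < n, 0 ≤ d u v)
    (hd_symm : ∀ u < n, ∀ v < n, d u v = d v u)
    (hd_diag : ∀ u < n, d u u = 0)
    (p : ℝ) (hp : p = 1 - 1 / (t : ℝ))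
    (ℓ : ℝ)
    (hℓ : IsGreatest {x : ℝ | ∃ σ : ℕ → ℕ, Set.InjOn σ (Set.Iio t) ∧
        Set.MapsTo σ (Set.Iio t) (Set.Iio n) ∧
        x = ∑ i ∈ Finset.range (t - 1), d (σ i) (σ (i + 1))} ℓ)
    (π : ℕ → ℕ) (hπ : IsPermOn n π)
    (hP1 : ∀ i, 1 ≤ i → 2 * i + 2 ≤ n →
      d (π (2 * i)) (π (2 * i + 1)) ≤ d (π (2 * i - 2)) (π (2 * i - 1)))
    (hP2 : ∀ i, 1 ≤ i → 2 * i + 1 ≤ n →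
      1 / 2 * d (π (2 * i - 2)) (π (2 * i - 1)) ≤ d (π (2 * i - 1)) (π (2 * i)))
    (hP3 : 1 / 4 * (((t : ℝ) - 2) / ((t : ℝ) - 1)) * ℓ ≤
      ∑ i ∈ Finset.Icc 1 ((t - 1) / 2), d (π (2 * i - 2)) (π (2 * i - 1))) :
    ∀ π', IsPermOn n π' →
      p ^ t * (1 - p ^ t) * (3 / 16 - 1 / (8 * (t : ℝ))) *
          (((t : ℝ) - 2) / ((t : ℝ) - 1)) * OHP n d (fun _ => p) π' ≤
        OHP n d (fun _ => p) π := by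
  intro π' hπ'
  have ht2' : (2 : ℝ) ≤ t := by exact_mod_cast ht2
  have ht0 : (0 : ℝ) < t := by linarith
  have hinv : 1 / (t : ℝ) ≤ 1 := by rw [div_le_one ht0]; linarith
  have hinv0 : 0 < 1 / (t : ℝ) := by positivity
  have hp0 : 0 ≤ p := by rw [hp]; linarith
  have hp1 : p ≤ 1 := by rw [hp]; linarith
  have hub : ∀ σ : ℕ → ℕ, Set.InjOn σ (Set.Iio t) → Set.MapsTo σ (Set.Iio t) (Set.Iio n) →
      ∑ i ∈ Finset.range (t - 1), d (σ i) (σ (i + 1)) ≤ ℓ :=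
    fun σ h1 h2 => hℓ.2 ⟨σ, h1, h2, rfl⟩
  have hℓ0 : 0 ≤ ℓ := by
    obtain ⟨σ, -, h2, rfl⟩ := hℓ.1
    refine Finset.sum_nonneg fun i hi => ?_
    have hi' := Finset.mem_range.1 hi
    exact hd_nonneg _ (h2 (show i < t by omega)) _ (h2 (show i + 1 < t by omega))
  have hU := OHP_upper ht2 htn hd_nonneg hp0 hp1 hp hℓ0 hub hπ'
  have hLow := OHP_lower (T := (t - 1) / 2) htn (by omega) hd_nonneg hp0 hp1 hπ
    (fun m hm => by
      have h := hP1 (m + 1) (by omega) (by omega)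
      rwa [show 2 * (m + 1) - 2 = 2 * m by omega,
        show 2 * (m + 1) - 1 = 2 * m + 1 by omega] at h)
    (fun m hm => by
      have h := hP2 (m + 1) (by omega) (by omega)
      rwa [show 2 * (m + 1) - 2 = 2 * m by omega,
        show 2 * (m + 1) - 1 = 2 * m + 1 by omega] at h)
  have hre : ∑ i ∈ Finset.Icc 1 ((t - 1) / 2), d (π (2 * i - 2)) (π (2 * i - 1)) =
      ∑ m ∈ Finset.range ((t - 1) / 2), d (π (2 * m)) (π (2 * m + 1)) := by
    rw [← Finset.Ico_add_one_right_eq_Icc, Finset.sum_Ico_eq_sum_range, Nat.add_sub_cancel]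
    refine Finset.sum_congr rfl fun m _ => ?_
    rw [show 2 * (1 + m) - 2 = 2 * m by omega, show 2 * (1 + m) - 1 = 2 * m + 1 by omega]
  rw [hre] at hP3
  have hr : 0 ≤ ((t : ℝ) - 2) / ((t : ℝ) - 1) := div_nonneg (by linarith) (by linarith)
  set r := ((t : ℝ) - 2) / ((t : ℝ) - 1)
  have hc : 0 ≤ 3 / 16 - 1 / (8 * (t : ℝ)) := by
    have : 1 / (8 * (t : ℝ)) = 1 / 8 * (1 / (t : ℝ)) := by field_simp
    linarith
  calc p ^ t * (1 - p ^ t) * (3 / 16 - 1 / (8 * (t : ℝ))) * r * OHP n d (fun _ => p) π'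
      = p ^ t * (3 / 16 - 1 / (8 * (t : ℝ))) * r *
          ((1 - p ^ t) * OHP n d (fun _ => p) π') := by ring
    _ ≤ p ^ t * (3 / 16 - 1 / (8 * (t : ℝ))) * r * (t * ℓ) :=
        mul_le_mul_of_nonneg_left hU (by positivity)
    _ = p ^ t * ((3 / 4 * t - 1 / 2) * (1 / 4 * r * ℓ)) := by field_simp; ring
    _ ≤ _ := mul_le_mul_of_nonneg_left
        (mul_le_mul_of_nonneg_left hP3 (by linarith)) (by positivity)
    _ ≤ _ := hLow
end

section
/- Suppose every continuation probability satisfies a ≤ p_i ≤ b with 0 < a ≤ b < 1, and let τ be an integer with 2 ≤ τ ≤ n. For a sequence σ = (σ(1), …, σ(τ)) of τ distinct items, define the truncated objective ℓ̃(σ) = Σ_{i=1}^{τ−1} (Σ_{j=i+1}^{τ} ∏_{t=1}^{j} p_{σ(t)}) · d(σ(i), σ(i+1)). If the permutation π is such that its τ-prefix maximizes ℓ̃ over all sequences of τ distinct items of U, then OHP(π) ≥ (a²(1−b)(1−b^{τ−1}) / (a² + (τ−1)·b^{τ+1})) · OHP(π′) for every permutation π′. -/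
/-!
Write `L` for the truncated objective of the prefix of `π`. All coefficients and distances are
nonnegative, so `L ≤ OHP(π)` (`truncObj_le_OHP`). It is therefore enough to bound `OHP(π')` by
`L / ((1 - b) (1 - b ^ (τ - 1)))`, because `a ^ 2 / (a ^ 2 + (τ - 1) b ^ (τ + 1)) ≤ 1`.

The edges of the path `π'` are cut into consecutive blocks of `τ - 1` edges. The block starting at
position `s` is spanned by the `τ` items at positions `s, …, s + τ - 1`, taken cyclically modulo
`n` so that the last, possibly incomplete, block is also covered by `τ` distinct items. The
optimality hypothesis bounds the truncated objective of this window by `L`. Prefix probabilities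
decay at least geometrically with ratio `b`, so each tail sum `W_{π'}(i)` is at most
`1 / (1 - b)` times its first term (`Wcoef_le`), and this first term is the prefix probability
`P_{π'}(s) ≤ b ^ s` times a term occurring in the truncated coefficient of the window. Hence the
block contributes at most `b ^ s * L / (1 - b)` (`block_le`), and summing over
`s = 0, τ - 1, 2 (τ - 1), …` gives a geometric series of ratio `b ^ (τ - 1)`.
-/

open Finset

/-- Truncated objective `ℓ̃(σ) = Σ_{i=1}^{τ−1} (Σ_{j=i+1}^{τ} ∏_{t=1}^{j} p_{σ(t)}) ·
d(σ(i),σ(i+1))`, written with 0-based positions. -/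
noncomputable def truncObj (τ : ℕ) (d : ℕ → ℕ → ℝ) (p : ℕ → ℝ) (σ : ℕ → ℕ) : ℝ :=
  ∑ i ∈ Finset.range (τ - 1),
    (∑ j ∈ Finset.Icc (i + 2) τ, ∏ t ∈ Finset.range j, p (σ t)) * d (σ i) (σ (i + 1))

section Prefix

variable {n : ℕ} {p : ℕ → ℝ} {π : ℕ → ℕ} {b : ℝ}

theorem Pprefix_nonneg (h0 : ∀ t < n, 0 ≤ p (π t)) {k : ℕ} (hk : k ≤ n) :
    0 ≤ Pprefix p π k :=
  Finset.prod_nonneg fun t ht => h0 t (lt_of_lt_of_le (Finset.mem_range.1 ht) hk)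

theorem Pprefix_le_pow (h0 : ∀ t < n, 0 ≤ p (π t)) (h1 : ∀ t < n, p (π t) ≤ b)
    {k : ℕ} (hk : k ≤ n) : Pprefix p π k ≤ b ^ k := by
  have h := Finset.prod_le_prod (s := Finset.range k) (f := fun t => p (π t)) (g := fun _ => b)
    (fun t ht => h0 t (lt_of_lt_of_le (Finset.mem_range.1 ht) hk))
    (fun t ht => h1 t (lt_of_lt_of_le (Finset.mem_range.1 ht) hk))
  simpa [Pprefix] using h

theorem Wcoef_nonneg (h0 : ∀ t < n, 0 ≤ p (π t)) (i : ℕ) : 0 ≤ Wcoef n p π i :=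
  Finset.sum_nonneg fun _ hj => Pprefix_nonneg h0 (Finset.mem_Icc.1 hj).2

theorem Wcoef_eq_zero {i : ℕ} (hi : n < i + 2) : Wcoef n p π i = 0 := by
  simp [Wcoef, Finset.Icc_eq_empty_of_lt hi]

/-- A tail of prefix probabilities is dominated by a geometric series of ratio `b`. The term
`b * P(m)` makes the bound stable under extending the tail by one more index. -/
theorem sum_Pprefix_le (h0 : ∀ t < n, 0 ≤ p (π t)) (h1 : ∀ t < n, p (π t) ≤ b)
    {k m : ℕ} (hkm : k ≤ m) (hm : m ≤ n) :
    (1 - b) * ∑ j ∈ Finset.Icc k m, Pprefix p π j + b * Pprefix p π m ≤ Pprefix p π k := by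
  induction m, hkm using Nat.le_induction with
  | base => simp; linarith
  | succ m hkm ih =>
    rw [Finset.sum_Icc_succ_top (by omega)]
    have hs : Pprefix p π (m + 1) = Pprefix p π m * p (π m) := Finset.prod_range_succ _ _
    have := mul_le_mul_of_nonneg_left (h1 m (by omega)) (Pprefix_nonneg h0 (k := m) (by omega))
    linarith [ih (by omega)]

theorem Wcoef_le (hb0 : 0 ≤ b) (h0 : ∀ t < n, 0 ≤ p (π t))
    (h1 : ∀ t < n, p (π t) ≤ b) {i : ℕ} (hi : i + 2 ≤ n) :
    (1 - b) * Wcoef n p π i ≤ Pprefix p π (i + 2) := by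
  have h := sum_Pprefix_le h0 h1 hi le_rfl
  have := mul_nonneg hb0 (Pprefix_nonneg h0 (le_refl n))
  unfold Wcoef
  linarith

end Prefix

theorem truncObj_nonneg {n τ : ℕ} {d : ℕ → ℕ → ℝ} {p : ℕ → ℝ} {σ : ℕ → ℕ}
    (hd : ∀ u < n, ∀ v < n, 0 ≤ d u v) (hp : ∀ i < n, 0 ≤ p i)
    (hσ : Set.MapsTo σ (Set.Iio τ) (Set.Iio n)) : 0 ≤ truncObj τ d p σ := by
  refine Finset.sum_nonneg fun i hi => ?_
  have hi := Finset.mem_range.1 hi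
  exact mul_nonneg (Wcoef_nonneg (fun t ht => hp _ (hσ ht)) i)
    (hd _ (hσ (show i < τ by omega)) _ (hσ (show i + 1 < τ by omega)))

theorem truncObj_le_OHP {n τ : ℕ} {d : ℕ → ℕ → ℝ} {p : ℕ → ℝ} {π : ℕ → ℕ}
    (hd : ∀ u < n, ∀ v < n, 0 ≤ d u v) (hp : ∀ i < n, 0 ≤ p i) (hτ : τ ≤ n)
    (hπ : Set.MapsTo π (Set.Iio n) (Set.Iio n)) : truncObj τ d p π ≤ OHP n d p π := by
  have h0 : ∀ t < n, 0 ≤ p (π t) := fun t ht => hp _ (hπ ht)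
  have hdd : ∀ i ∈ Finset.range (n - 1), 0 ≤ d (π i) (π (i + 1)) := fun i hi => by
    have hi := Finset.mem_range.1 hi
    exact hd _ (hπ (show i < n by omega)) _ (hπ (show i + 1 < n by omega))
  have hsub : Finset.range (τ - 1) ⊆ Finset.range (n - 1) :=
    Finset.range_subset_range.2 (by omega)
  calc truncObj τ d p π
      ≤ ∑ i ∈ Finset.range (τ - 1), Wcoef n p π i * d (π i) (π (i + 1)) := by
        refine Finset.sum_le_sum fun i hi => mul_le_mul_of_nonneg_right ?_ (hdd i (hsub hi))
        exact Finset.sum_le_sum_of_subset_of_nonneg (Finset.Icc_subset_Icc_right hτ)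
          fun j hj _ => Pprefix_nonneg h0 (Finset.mem_Icc.1 hj).2
    _ ≤ OHP n d p π :=
        Finset.sum_le_sum_of_subset_of_nonneg hsub
          fun i hi _ => mul_nonneg (Wcoef_nonneg h0 i) (hdd i hi)

/-- The path `π` read cyclically from position `s` on. -/
def window (n : ℕ) (π : ℕ → ℕ) (s t : ℕ) : ℕ := π ((s + t) % n)

theorem window_eq {n s t : ℕ} (π : ℕ → ℕ) (h : s + t < n) : window n π s t = π (s + t) := by
  simp [window, Nat.mod_eq_of_lt h]

theorem window_mapsTo {n τ : ℕ} (hn : 0 < n) {π : ℕ → ℕ} (hπ : IsPermOn n π) (s : ℕ) :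
    Set.MapsTo (window n π s) (Set.Iio τ) (Set.Iio n) :=
  fun _ _ => hπ.mapsTo (Nat.mod_lt _ hn)

theorem window_injOn {n τ : ℕ} (hn : 0 < n) (hτ : τ ≤ n) {π : ℕ → ℕ} (hπ : IsPermOn n π)
    (s : ℕ) : Set.InjOn (window n π s) (Set.Iio τ) := by
  intro x hx y hy hxy
  have h : (s + x) % n = (s + y) % n := hπ.injOn (Nat.mod_lt _ hn) (Nat.mod_lt _ hn) hxy
  have h' : x ≡ y [MOD n] := Nat.ModEq.add_left_cancel' s h
  exact h'.eq_of_lt_of_lt (lt_of_lt_of_le hx hτ) (lt_of_lt_of_le hy hτ)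

/-- As long as the window does not wrap around, its prefix probabilities are those of `π`
relative to position `s`. -/
theorem Pprefix_add {n s k : ℕ} (p : ℕ → ℝ) (π : ℕ → ℕ) (h : s + k ≤ n) :
    Pprefix p π (s + k) = Pprefix p π s * Pprefix p (window n π s) k := by
  unfold Pprefix
  rw [Finset.prod_range_add]
  congr 1
  refine Finset.prod_congr rfl fun t ht => ?_
  rw [window_eq π (by have := Finset.mem_range.1 ht; omega)]

/-- The `τ - 1` consecutive edges from position `s` on contribute, after multiplication
by `1 - b`, at most `b ^ s` times the truncated objective of the window starting there. Edges beyond the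
end of the path have coefficient `Wcoef = 0`. -/
theorem block_le {n τ : ℕ} {d : ℕ → ℕ → ℝ} {p : ℕ → ℝ} {π : ℕ → ℕ} {b : ℝ} (hn : 0 < n)
    (hd : ∀ u < n, ∀ v < n, 0 ≤ d u v) (hp : ∀ i < n, 0 ≤ p i ∧ p i ≤ b)
    (hb0 : 0 ≤ b) (hπ : IsPermOn n π) (s : ℕ) :
    (1 - b) * ∑ t ∈ Finset.range (τ - 1), Wcoef n p π (s + t) * d (π (s + t)) (π (s + t + 1))
      ≤ b ^ s * truncObj τ d p (window n π s) := by
  have h0 : ∀ t < n, 0 ≤ p (π t) := fun t ht => (hp _ (hπ.mapsTo ht)).1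
  have h1 : ∀ t < n, p (π t) ≤ b := fun t ht => (hp _ (hπ.mapsTo ht)).2
  have hw : ∀ t, window n π s t < n := fun t => hπ.mapsTo (Nat.mod_lt _ hn)
  have hw0 : ∀ t < τ, 0 ≤ p (window n π s t) := fun t _ => (hp _ (hw t)).1
  unfold truncObj
  rw [Finset.mul_sum, Finset.mul_sum]
  refine Finset.sum_le_sum fun t ht => ?_
  have ht := Finset.mem_range.1 ht
  change _ ≤ b ^ s * (Wcoef τ p (window n π s) t * _)
  have hW := Wcoef_nonneg hw0 t
  have hD := hd _ (hw t) _ (hw (t + 1))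
  rcases lt_or_ge n (s + t + 2) with h | h
  · rw [Wcoef_eq_zero h]
    simpa using mul_nonneg (pow_nonneg hb0 s) (mul_nonneg hW hD)
  · rw [← mul_assoc, ← mul_assoc]
    have e1 : π (s + t) = window n π s t := (window_eq π (by omega)).symm
    have e2 : π (s + t + 1) = window n π s (t + 1) :=
      (window_eq (s := s) (t := t + 1) π (by omega)).symm
    rw [e1, e2]
    refine mul_le_mul_of_nonneg_right ?_ hD
    have hfirst : Pprefix p (window n π s) (t + 2) ≤ Wcoef τ p (window n π s) t :=
      Finset.single_le_sum (f := fun j => Pprefix p (window n π s) j)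
        (fun j hj => Pprefix_nonneg hw0 (Finset.mem_Icc.1 hj).2)
        (Finset.mem_Icc.2 ⟨le_rfl, by omega⟩)
    calc (1 - b) * Wcoef n p π (s + t) ≤ Pprefix p π (s + (t + 2)) := Wcoef_le hb0 h0 h1 h
      _ = Pprefix p π s * Pprefix p (window n π s) (t + 2) := Pprefix_add p π (by omega)
      _ ≤ b ^ s * Wcoef τ p (window n π s) t :=
        mul_le_mul (Pprefix_le_pow h0 h1 (by omega)) hfirst
          (Pprefix_nonneg hw0 (by omega)) (pow_nonneg hb0 s)

/-- If `L` bounds the truncated objective of every window, the whole path is bounded by summing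
the blocks starting at `0, τ - 1, 2 (τ - 1), …`. -/
theorem OHP_le {n τ : ℕ} {d : ℕ → ℕ → ℝ} {p : ℕ → ℝ} {π : ℕ → ℕ} {b L : ℝ} (hn : 0 < n)
    (hτ : 2 ≤ τ) (hd : ∀ u < n, ∀ v < n, 0 ≤ d u v) (hp : ∀ i < n, 0 ≤ p i ∧ p i ≤ b)
    (hb0 : 0 ≤ b) (hb : b < 1) (hπ : IsPermOn n π) (hL : 0 ≤ L)
    (hbest : ∀ s, truncObj τ d p (window n π s) ≤ L) :
    (1 - b) * (1 - b ^ (τ - 1)) * OHP n d p π ≤ L := by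
  have h0 : ∀ t < n, 0 ≤ p (π t) := fun t ht => (hp _ (hπ.mapsTo ht)).1
  set g : ℕ → ℝ := fun i => Wcoef n p π i * d (π i) (π (i + 1)) with hg
  have hg0 : ∀ i, 0 ≤ g i := fun i => by
    rcases lt_or_ge n (i + 2) with h | h
    · simp [hg, Wcoef_eq_zero h]
    · exact mul_nonneg (Wcoef_nonneg h0 i)
        (hd _ (hπ.mapsTo (show i < n by omega)) _ (hπ.mapsTo (show i + 1 < n by omega)))
  have hr1 : 0 ≤ 1 - b ^ (τ - 1) := sub_nonneg.2 (pow_le_one₀ hb0 hb.le)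
  have key : ∀ m : ℕ, (1 - b) * (1 - b ^ (τ - 1)) * ∑ i ∈ Finset.range (m * (τ - 1)), g i
      ≤ (1 - (b ^ (τ - 1)) ^ m) * L := by
    intro m
    induction m with
    | zero => simp
    | succ m ih =>
      rw [Nat.succ_mul, Finset.sum_range_add, pow_succ]
      have h := (block_le (τ := τ) hn hd hp hb0 hπ (m * (τ - 1))).trans
        (mul_le_mul_of_nonneg_left (hbest (m * (τ - 1))) (pow_nonneg hb0 _))
      rw [mul_comm m (τ - 1), pow_mul, mul_comm (τ - 1) m] at h
      have h' := mul_le_mul_of_nonneg_left h hr1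
      simp only [hg] at ih ⊢
      linarith
  have hsub : OHP n d p π ≤ ∑ i ∈ Finset.range (n * (τ - 1)), g i := by
    refine Finset.sum_le_sum_of_subset_of_nonneg (Finset.range_subset_range.2 ?_)
      fun i _ _ => hg0 i
    have := Nat.le_mul_of_pos_right n (show 0 < τ - 1 by omega)
    omega
  have h := mul_le_mul_of_nonneg_left hsub (mul_nonneg (sub_nonneg.2 hb.le) hr1)
  have := mul_nonneg (pow_nonneg (pow_nonneg hb0 (τ - 1)) n) hL
  linarith [key n]

/-- the best-`τ`-items algorithm with non-uniform probabilities in `[a,b]`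
is an `(a²(1−b)(1−b^{τ−1})/(a² + (τ−1)b^{τ+1}))`-approximation for `OHP`. -/
theorem stmt_7 (n : ℕ) (hn : 2 ≤ n) (d : ℕ → ℕ → ℝ) (p : ℕ → ℝ)
    (hd_nonneg : ∀ u < n, ∀ v < n, 0 ≤ d u v)
    (hd_symm : ∀ u < n, ∀ v < n, d u v = d v u)
    (hd_diag : ∀ u < n, d u u = 0)
    (a b : ℝ) (ha : 0 < a) (hab : a ≤ b) (hb : b < 1)
    (hp : ∀ i < n, a ≤ p i ∧ p i ≤ b)
    (τ : ℕ) (hτ2 : 2 ≤ τ) (hτn : τ ≤ n)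
    (π : ℕ → ℕ) (hπ : IsPermOn n π)
    (hbest : ∀ σ : ℕ → ℕ, Set.InjOn σ (Set.Iio τ) →
      Set.MapsTo σ (Set.Iio τ) (Set.Iio n) →
      truncObj τ d p σ ≤ truncObj τ d p π) :
    ∀ π', IsPermOn n π' →
      a ^ 2 * (1 - b) * (1 - b ^ (τ - 1)) / (a ^ 2 + ((τ : ℝ) - 1) * b ^ (τ + 1)) *
          OHP n d p π' ≤ OHP n d p π := by
  intro π' hπ'
  have hb0 : 0 ≤ b := ha.le.trans hab
  have hp' : ∀ i < n, 0 ≤ p i ∧ p i ≤ b := fun i hi => ⟨ha.le.trans (hp i hi).1, (hp i hi).2⟩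
  have hp0 : ∀ i < n, 0 ≤ p i := fun i hi => (hp' i hi).1
  have hn0 : 0 < n := by omega
  have hL0 : ∀ ρ, IsPermOn n ρ → 0 ≤ truncObj τ d p ρ := fun ρ hρ =>
    truncObj_nonneg hd_nonneg hp0 fun x hx => hρ.mapsTo (lt_of_lt_of_le hx hτn)
  have hmain := OHP_le hn0 hτ2 hd_nonneg hp' hb0 hb hπ' (hL0 π hπ)
    fun s => hbest _ (window_injOn hn0 hτn hπ' s) (window_mapsTo hn0 hπ' s)
  have hOHP := (hL0 π' hπ').trans (truncObj_le_OHP hd_nonneg hp0 hτn hπ'.mapsTo)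
  refine le_trans (mul_le_mul_of_nonneg_right ?_ hOHP)
    (hmain.trans (truncObj_le_OHP hd_nonneg hp0 hτn hπ.mapsTo))
  have hτ1 : (0 : ℝ) ≤ (τ : ℝ) - 1 := by
    have : (2 : ℝ) ≤ τ := by exact_mod_cast hτ2
    linarith
  have hx : 0 ≤ ((τ : ℝ) - 1) * b ^ (τ + 1) := mul_nonneg hτ1 (pow_nonneg hb0 _)
  have hK : 0 ≤ (1 - b) * (1 - b ^ (τ - 1)) :=
    mul_nonneg (sub_nonneg.2 hb.le) (sub_nonneg.2 (pow_le_one₀ hb0 hb.le))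
  rw [div_le_iff₀ (by positivity)]
  have := mul_nonneg hK hx
  linarith
end

section
/- For every permutation π of U, 2 · OSD(π) ≥ OHP(π). -/
/-!
Exchanging the order of summation gives `OHP = ∑ k, P(k + 2) * L k`, where
`L k = ∑ i ≤ k, d(π i, π (i + 1))` is the length of the path through the first `k + 2` items
(`OHP_eq`). In `OSD` the same weight multiplies `S k = ∑ t ≤ k, d(π (k + 1), π t)`, so it suffices
that `L k ≤ 2 * S k` for each `k` (`path_le_two_mul_star`): routing every edge of the path through
its last vertex `π (k + 1)` by the triangle inequality uses each distance `d(π (k + 1), π t)` at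
most twice.
-/

open Finset

/-- The ordered Hamiltonian path objective as a weighted sum of lengths of initial subpaths. -/
lemma OHP_eq (n : ℕ) (d : ℕ → ℕ → ℝ) (p : ℕ → ℝ) (π : ℕ → ℕ) :
    OHP n d p π = ∑ k ∈ Finset.range (n - 1),
      Pprefix p π (k + 2) * ∑ i ∈ Finset.range (k + 1), d (π i) (π (i + 1)) := by
  have hW : ∀ i, Wcoef n p π i = ∑ k ∈ Finset.Ico i (n - 1), Pprefix p π (k + 2) := by
    intro i
    unfold Wcoef
    rw [Finset.sum_Ico_add' (fun j => Pprefix p π j) i (n - 1) 2]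
    apply Finset.sum_congr _ fun _ _ => rfl
    ext j
    simp only [Finset.mem_Icc, Finset.mem_Ico]
    omega
  unfold OHP
  simp only [hW, Finset.sum_mul, Finset.mul_sum]
  apply Finset.sum_comm'
  intro i k
  simp only [Finset.mem_range, Finset.mem_Ico]
  omega

lemma path_le_two_mul_star (d : ℕ → ℕ → ℝ) (x : ℕ → ℕ) (k : ℕ)
    (h0 : 0 ≤ d (x (k + 1)) (x 0)) (hdiag : d (x (k + 1)) (x (k + 1)) = 0)
    (htri : ∀ i ≤ k, d (x i) (x (i + 1)) ≤ d (x (k + 1)) (x i) + d (x (k + 1)) (x (i + 1))) :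
    ∑ i ∈ Finset.range (k + 1), d (x i) (x (i + 1)) ≤
      2 * ∑ t ∈ Finset.range (k + 1), d (x (k + 1)) (x t) := by
  have h1 : ∑ i ∈ Finset.range (k + 1), d (x i) (x (i + 1)) ≤
      ∑ i ∈ Finset.range (k + 1), (d (x (k + 1)) (x i) + d (x (k + 1)) (x (i + 1))) :=
    Finset.sum_le_sum fun i hi => htri i (by have := Finset.mem_range.mp hi; omega)
  rw [Finset.sum_add_distrib] at h1
  -- The shifted sum differs from the unshifted one by its two end terms.
  have h2 := Finset.sum_range_succ (fun t => d (x (k + 1)) (x t)) (k + 1)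
  have h3 := Finset.sum_range_succ' (fun t => d (x (k + 1)) (x t)) (k + 1)
  linarith

/-- for every permutation `π`, `2·OSD(π) ≥ OHP(π)` (assuming the triangle
inequality for `d`). -/
theorem stmt_11 (n : ℕ) (hn : 2 ≤ n) (d : ℕ → ℕ → ℝ) (p : ℕ → ℝ)
    (hd_nonneg : ∀ u < n, ∀ v < n, 0 ≤ d u v)
    (hd_symm : ∀ u < n, ∀ v < n, d u v = d v u)
    (hd_diag : ∀ u < n, d u u = 0)
    (hd_tri : ∀ u < n, ∀ v < n, ∀ w < n, d u w ≤ d u v + d v w)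
    (hp : ∀ i < n, 0 ≤ p i ∧ p i ≤ 1)
    (π : ℕ → ℕ) (hπ : IsPermOn n π) :
    OHP n d p π ≤ 2 * OSD n d p π := by
  have hlt : ∀ i < n, π i < n := fun i hi => hπ.mapsTo hi
  rw [OHP_eq]
  unfold OSD
  rw [Finset.mul_sum]
  apply Finset.sum_le_sum
  intro k hk
  have hk : k + 1 < n := by have := Finset.mem_range.mp hk; omega
  have hP : 0 ≤ Pprefix p π (k + 2) :=
    Finset.prod_nonneg fun t ht =>
      (hp _ (hlt t (by have := Finset.mem_range.mp ht; omega))).1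
  have hL := path_le_two_mul_star d π k
    (hd_nonneg _ (hlt _ hk) _ (hlt 0 (by omega))) (hd_diag _ (hlt _ hk)) (by
      intro i hi
      rw [hd_symm _ (hlt _ hk) _ (hlt i (by omega))]
      exact hd_tri _ (hlt i (by omega)) _ (hlt _ hk) _ (hlt (i + 1) (by omega)))
  rw [mul_left_comm]
  exact mul_le_mul_of_nonneg_left hL hP
end

section
/- Suppose 0 < p_i < 1 for every item i, and let π* be a permutation maximizing OSD over all permutations of U. Then for every 1 ≤ i ≤ n−1, Σ_{t=1}^{i} d(π*(i+1), π*(t)) ≤ ((1 − p_{π*(i+1)}) / p_{π*(i+1)}) · Σ_{j=1}^{i} (p_{π*(j+1)} / (1 − p_{π*(j+1)})) · d(π*(j), π*(j+1)). -/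
/-!
Only exchanges of two adjacent items are needed. Write `S k = ∑ t < k, d (π k) (π t)` for the
distance gain of position `k` (`gain`) and `r x = p x / (1 - p x)`. Exchanging the items
`x, y` at positions `k, k + 1` alters only the two terms of `OSD` at these positions
(`term_swap_of_ne`). Dividing the resulting inequality by the common factor
`P(k) (1 - p x) (1 - p y) > 0`, optimality gives
`r y * S (k + 1) ≤ r x * S k + r y * d x y` (`gain_step`). Since `S 0 = 0`, these inequalities
telescope to `r (π (i + 1)) * S (i + 1) ≤ ∑ j ≤ i, r (π (j + 1)) * d (π j) (π (j + 1))`, and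
dividing by `r (π (i + 1))` yields the claim.
-/

open Finset

/-- Total distance from the item in position `k` to the items in earlier positions. -/
noncomputable def gain (d : ℕ → ℕ → ℝ) (π : ℕ → ℕ) (k : ℕ) : ℝ :=
  ∑ t ∈ Finset.range k, d (π k) (π t)

/-- Position `0` can be included in the sum defining `OSD`, as it contributes `0`. -/
lemma OSD_eq_sum_gain (n : ℕ) (hn : 1 ≤ n) (d : ℕ → ℕ → ℝ) (p : ℕ → ℝ) (π : ℕ → ℕ) :
    OSD n d p π = ∑ i ∈ Finset.range n, Pprefix p π (i + 1) * gain d π i := by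
  obtain ⟨m, rfl⟩ : ∃ m, n = m + 1 := ⟨n - 1, by omega⟩
  rw [Finset.sum_range_succ']
  simp [OSD, gain]

lemma Pprefix_succ (p : ℕ → ℝ) (π : ℕ → ℕ) (k : ℕ) :
    Pprefix p π (k + 1) = Pprefix p π k * p (π k) :=
  Finset.prod_range_succ _ _

lemma swap_eq_self_of_lt {k t : ℕ} (h : t < k) : Equiv.swap k (k + 1) t = t :=
  Equiv.swap_apply_of_ne_of_ne (by omega) (by omega)

/-- The swap of `k, k + 1` permutes every initial segment containing both positions, so sums
and products over that segment are invariant under it. -/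
lemma support_swap_subset {k m : ℕ} (h : k + 2 ≤ m) :
    {a | Equiv.swap k (k + 1) a ≠ a} ⊆ (Finset.range m : Set ℕ) := by
  intro a ha
  by_contra hm
  refine ha (Equiv.swap_apply_of_ne_of_ne ?_ ?_) <;>
    simp only [Finset.coe_range, Set.mem_Iio, not_lt] at hm <;> omega

/-- A prefix probability can change only if the prefix ends between the swapped positions. -/
lemma Pprefix_swap {p : ℕ → ℝ} {π : ℕ → ℕ} {k m : ℕ} (hm : m ≠ k + 1) :
    Pprefix p (π ∘ Equiv.swap k (k + 1)) m = Pprefix p π m := by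
  unfold Pprefix
  rcases Nat.lt_or_ge m (k + 1) with h | h
  · refine Finset.prod_congr rfl fun t ht => ?_
    rw [Function.comp_apply, swap_eq_self_of_lt (by have := Finset.mem_range.1 ht; omega)]
  · exact Equiv.Perm.prod_comp (Equiv.swap k (k + 1)) _ (fun t => p (π t))
      (support_swap_subset (by omega))

/-- Terms of `OSD` at positions other than `k, k + 1` are unchanged by the swap. -/
lemma term_swap_of_ne {d : ℕ → ℕ → ℝ} {p : ℕ → ℝ} {π : ℕ → ℕ} {k i : ℕ}
    (h0 : i ≠ k) (h1 : i ≠ k + 1) :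
    Pprefix p (π ∘ Equiv.swap k (k + 1)) (i + 1) * gain d (π ∘ Equiv.swap k (k + 1)) i =
      Pprefix p π (i + 1) * gain d π i := by
  rw [Pprefix_swap (by omega)]
  congr 1
  unfold gain
  simp only [Function.comp_apply, Equiv.swap_apply_of_ne_of_ne h0 h1]
  rcases Nat.lt_or_ge i k with h | h
  · refine Finset.sum_congr rfl fun t ht => ?_
    rw [swap_eq_self_of_lt (by have := Finset.mem_range.1 ht; omega)]
  · exact Equiv.Perm.sum_comp (Equiv.swap k (k + 1)) _ (fun t => d (π i) (π t))
      (support_swap_subset (by omega))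

/-- After the swap, position `k` holds `π (k + 1)`, which loses its distance to `π k`. -/
lemma gain_swap_left (d : ℕ → ℕ → ℝ) (π : ℕ → ℕ) (k : ℕ) :
    gain d (π ∘ Equiv.swap k (k + 1)) k = gain d π (k + 1) - d (π (k + 1)) (π k) := by
  unfold gain
  rw [Finset.sum_range_succ, add_sub_cancel_right]
  refine Finset.sum_congr rfl fun t ht => ?_
  simp [swap_eq_self_of_lt (Finset.mem_range.1 ht)]

/-- After the swap, position `k + 1` holds `π k`, which gains its distance to `π (k + 1)`. -/
lemma gain_swap_right (d : ℕ → ℕ → ℝ) (π : ℕ → ℕ) (k : ℕ) :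
    gain d (π ∘ Equiv.swap k (k + 1)) (k + 1) = gain d π k + d (π k) (π (k + 1)) := by
  unfold gain
  rw [Finset.sum_range_succ]
  simp only [Function.comp_apply, Equiv.swap_apply_left, Equiv.swap_apply_right]
  congr 1
  refine Finset.sum_congr rfl fun t ht => ?_
  rw [swap_eq_self_of_lt (Finset.mem_range.1 ht)]

lemma OSD_swap_sub {n : ℕ} (d : ℕ → ℕ → ℝ) (p : ℕ → ℝ) (π : ℕ → ℕ) {k : ℕ}
    (hk : k + 1 < n) :
    OSD n d p (π ∘ Equiv.swap k (k + 1)) - OSD n d p π =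
      Pprefix p π k *
        (p (π (k + 1)) * (gain d π (k + 1) - d (π (k + 1)) (π k))
          + p (π k) * p (π (k + 1)) * (gain d π k + d (π k) (π (k + 1)))
          - p (π k) * gain d π k - p (π k) * p (π (k + 1)) * gain d π (k + 1)) := by
  rw [OSD_eq_sum_gain n (by omega), OSD_eq_sum_gain n (by omega), ← Finset.sum_sub_distrib,
    ← Finset.sum_subset (s₁ := {k, k + 1}), Finset.sum_pair (by omega), gain_swap_left,
    gain_swap_right, Pprefix_swap (m := k + 1 + 1) (by omega), Pprefix_succ _ _ k,
    Pprefix_swap (m := k) (by omega), Pprefix_succ _ _ (k + 1), Pprefix_succ _ _ k]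
  · simp only [Function.comp_apply, Equiv.swap_apply_left]
    ring
  · intro a ha
    simp only [Finset.mem_insert, Finset.mem_singleton] at ha
    rw [Finset.mem_range]
    omega
  · intro i _ hi
    simp only [Finset.mem_insert, Finset.mem_singleton, not_or] at hi
    rw [term_swap_of_ne hi.1 hi.2, sub_self]

lemma IsPermOn.comp_swap_s12 {n : ℕ} {π : ℕ → ℕ} (hπ : IsPermOn n π) {k : ℕ} (hk : k + 1 < n) :
    IsPermOn n (π ∘ Equiv.swap k (k + 1)) := by
  have hmaps : Set.MapsTo (Equiv.swap k (k + 1)) (Set.Iio n) (Set.Iio n) := by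
    intro a ha
    simp only [Set.mem_Iio] at ha ⊢
    rw [Equiv.swap_apply_def]
    split_ifs <;> omega
  refine Set.BijOn.comp hπ ⟨hmaps, (Equiv.injective _).injOn, fun a ha => ?_⟩
  exact ⟨Equiv.swap k (k + 1) a, hmaps ha, Equiv.swap_apply_self _ _ _⟩

/-- Local optimality under one adjacent exchange, in telescoping form. -/
lemma gain_step {n : ℕ} {d : ℕ → ℕ → ℝ} {p : ℕ → ℝ}
    (hd_symm : ∀ u < n, ∀ v < n, d u v = d v u)
    (hp : ∀ i < n, 0 < p i ∧ p i < 1) {π : ℕ → ℕ} (hπ : IsPermOn n π)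
    (hopt : ∀ π', IsPermOn n π' → OSD n d p π' ≤ OSD n d p π) {k : ℕ} (hk : k + 1 < n) :
    p (π (k + 1)) / (1 - p (π (k + 1))) * gain d π (k + 1) ≤
      p (π k) / (1 - p (π k)) * gain d π k
        + p (π (k + 1)) / (1 - p (π (k + 1))) * d (π k) (π (k + 1)) := by
  have hlt : ∀ t < n, π t < n := fun t ht => hπ.mapsTo ht
  have hP : 0 < Pprefix p π k := Finset.prod_pos fun t ht =>
    (hp _ (hlt t (by have := Finset.mem_range.1 ht; omega))).1
  have h := sub_nonpos.2 (hopt _ (hπ.comp_swap_s12 hk))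
  rw [OSD_swap_sub d p π hk, hd_symm _ (hlt _ hk) _ (hlt k (by omega))] at h
  have h' := nonpos_of_mul_nonpos_right h hP
  have hx : 0 < 1 - p (π k) := sub_pos.2 (hp _ (hlt k (by omega))).2
  have hy : 0 < 1 - p (π (k + 1)) := sub_pos.2 (hp _ (hlt _ hk)).2
  generalize p (π k) = x at *
  generalize p (π (k + 1)) = y at *
  rw [← sub_nonneg]
  have key : x / (1 - x) * gain d π k + y / (1 - y) * d (π k) (π (k + 1))
      - y / (1 - y) * gain d π (k + 1) =
      (x * (1 - y) * gain d π k + y * (1 - x) * d (π k) (π (k + 1))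
        - y * (1 - x) * gain d π (k + 1)) / ((1 - x) * (1 - y)) := by
    field_simp
  rw [key]
  exact div_nonneg (by linarith) (mul_pos hx hy).le

/-- local optimality of an OSD-optimal ordering `π*`: for all
`1 ≤ i ≤ n−1` (here `i+1` with `i < n−1`, 0-based),
`Σ_{t=1}^{i} d(π*(i+1),π*(t)) ≤ ((1−p_{π*(i+1)})/p_{π*(i+1)}) ·
Σ_{j=1}^{i} (p_{π*(j+1)}/(1−p_{π*(j+1)})) · d(π*(j),π*(j+1))`. -/
theorem stmt_12 (n : ℕ) (hn : 2 ≤ n) (d : ℕ → ℕ → ℝ) (p : ℕ → ℝ)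
    (hd_nonneg : ∀ u < n, ∀ v < n, 0 ≤ d u v)
    (hd_symm : ∀ u < n, ∀ v < n, d u v = d v u)
    (hd_diag : ∀ u < n, d u u = 0)
    (hp : ∀ i < n, 0 < p i ∧ p i < 1)
    (π : ℕ → ℕ) (hπ : IsPermOn n π)
    (hopt : ∀ π', IsPermOn n π' → OSD n d p π' ≤ OSD n d p π) :
    ∀ i < n - 1,
      ∑ t ∈ Finset.range (i + 1), d (π (i + 1)) (π t) ≤
        (1 - p (π (i + 1))) / p (π (i + 1)) *
          ∑ j ∈ Finset.range (i + 1),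
            p (π (j + 1)) / (1 - p (π (j + 1))) * d (π j) (π (j + 1)) := by
  intro i hi
  have hlt : ∀ t < n, π t < n := fun t ht => hπ.mapsTo ht
  have tele : ∀ m < n, p (π m) / (1 - p (π m)) * gain d π m ≤
      ∑ j ∈ Finset.range m,
        p (π (j + 1)) / (1 - p (π (j + 1))) * d (π j) (π (j + 1)) := by
    intro m
    induction m with
    | zero => intro _; simp [gain]
    | succ k ih =>
      intro hk
      rw [Finset.sum_range_succ]
      linarith [gain_step hd_symm hp hπ hopt hk, ih (by omega)]
  obtain ⟨h0, h1⟩ := hp _ (hlt (i + 1) (by omega))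
  have h1' : 0 < 1 - p (π (i + 1)) := sub_pos.2 h1
  have hr := mul_le_mul_of_nonneg_left (tele (i + 1) (by omega)) (div_pos h1' h0).le
  rwa [← mul_assoc, div_mul_div_cancel₀ h0.ne', div_self h1'.ne', one_mul] at hr
end

section
/- Let (e_1, …, e_m) be a greedy matching of G. Then for every k with 1 ≤ k ≤ m and every matching M* of G with |M*| ≤ k, it holds that w(M_k) ≥ (1/2) · w(M*); in particular, the first k greedy edges have at least half the weight of a maximum-weight matching of size k. -/
/-!
Peel off the greedy edges from the front. At most two edges of the matching `M` meet the first
greedy edge `e 0`, and every edge of `M` weighs at most `w (e 0)`. Delete from `M` the edges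
meeting `e 0`, or one arbitrary edge if there is none. The deleted edges weigh at most
`2 * w (e 0)` together, the size of `M` drops by at least one, and the remaining edges avoid `e 0`,
so that they are still dominated greedily by the shifted sequence `e 1, e 2, …`. Induction on `k`
(`sum_le_two_mul_sum_of_greedy`) finishes the proof.
-/

open Finset

/-- Pairwise disjoint edges that all meet a fixed edge `a` number at most two, since choosing a
common vertex with `a` is injective. -/
theorem card_le_two_of_meets {V : Type*} (a : Sym2 V) (T : Finset (Sym2 V))
    (hT : ∀ f ∈ T, ∃ v, v ∈ a ∧ v ∈ f)
    (hmatch : ∀ f ∈ T, ∀ g ∈ T, f ≠ g → ∀ v, v ∈ f → v ∉ g) : T.card ≤ 2 := by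
  classical
  induction a using Sym2.ind with
  | _ x y =>
    have : Nonempty V := ⟨x⟩
    choose! c hca hcf using hT
    calc T.card ≤ ({x, y} : Finset V).card := by
          refine Finset.card_le_card_of_injOn c (fun f hf => ?_) (fun f hf g hg hfg => ?_)
          · simpa using hca f hf
          · by_contra hne
            exact hmatch f hf g hg hne (c f) (hcf f hf) (hfg ▸ hcf g hg)
      _ ≤ 2 := Finset.card_le_two

/-- The charging bound, with the greedy condition required only of the edges of `M`: this makes
the hypotheses stable under deleting edges from `M` and shifting the sequence `e`. -/
theorem sum_le_two_mul_sum_of_greedy {V : Type*} (w : Sym2 V → ℝ) (k : ℕ) :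
    ∀ (e : ℕ → Sym2 V) (M : Finset (Sym2 V)), (∀ i < k, 0 ≤ w (e i)) →
      (∀ j < k, ∀ f ∈ M, (∀ i < j, ∀ v, v ∈ e i → v ∉ f) → w f ≤ w (e j)) →
      (∀ f ∈ M, ∀ g ∈ M, f ≠ g → ∀ v, v ∈ f → v ∉ g) → M.card ≤ k →
      ∑ f ∈ M, w f ≤ 2 * ∑ i ∈ Finset.range k, w (e i) := by
  classical
  induction k with
  | zero =>
    intro e M _ _ _ hc
    simp [Finset.card_eq_zero.mp (Nat.le_zero.mp hc)]
  | succ k ih =>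
    intro e M hnn hg hmatch hc
    obtain rfl | ⟨f₀, hf₀⟩ := M.eq_empty_or_nonempty
    · have := Finset.sum_nonneg fun i hi => hnn i (Finset.mem_range.mp hi)
      simpa using this
    -- `R` is the set of deleted edges: it is nonempty and contains every edge that meets `e 0`.
    obtain ⟨R, hRM, hR2, hR1, hR⟩ : ∃ R ⊆ M, R.card ≤ 2 ∧ 1 ≤ R.card ∧
        ∀ f ∈ M, (∃ v, v ∈ e 0 ∧ v ∈ f) → f ∈ R := by
      by_cases h : ∃ f ∈ M, ∃ v, v ∈ e 0 ∧ v ∈ f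
      · obtain ⟨f, hf, hfv⟩ := h
        refine ⟨M.filter fun f => ∃ v, v ∈ e 0 ∧ v ∈ f, Finset.filter_subset _ _,
          card_le_two_of_meets (e 0) _ (fun f hf => (Finset.mem_filter.mp hf).2)
            (fun f hf g hg => hmatch f (Finset.mem_filter.mp hf).1 g (Finset.mem_filter.mp hg).1),
          Finset.card_pos.mpr ⟨f, Finset.mem_filter.mpr ⟨hf, hfv⟩⟩,
          fun f hf hfv => Finset.mem_filter.mpr ⟨hf, hfv⟩⟩
      · exact ⟨{f₀}, by simpa using hf₀, by simp, by simp, fun f hf hfv => (h ⟨f, hf, hfv⟩).elim⟩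
    have hrest : ∑ f ∈ M \ R, w f ≤ 2 * ∑ i ∈ Finset.range k, w (e (i + 1)) := by
      refine ih (fun i => e (i + 1)) (M \ R) (fun i hi => hnn _ (by omega)) ?_ ?_ ?_
      · intro j hj f hf hav
        obtain ⟨hfM, hfR⟩ := Finset.mem_sdiff.mp hf
        refine hg (j + 1) (by omega) f hfM fun i hi v hv hvf => ?_
        cases i with
        | zero => exact hfR (hR f hfM ⟨v, hv, hvf⟩)
        | succ i => exact hav i (by omega) v hv hvf
      · exact fun f hf g hg' =>
          hmatch f (Finset.mem_sdiff.mp hf).1 g (Finset.mem_sdiff.mp hg').1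
      · rw [Finset.card_sdiff_of_subset hRM]
        omega
    have hdel : ∑ f ∈ R, w f ≤ 2 * w (e 0) := by
      have h1 : ∑ f ∈ R, w f ≤ R.card • w (e 0) :=
        Finset.sum_le_card_nsmul _ _ _ fun f hf =>
          hg 0 (by omega) f (hRM hf) fun i hi => absurd hi (by omega)
      have h2 : (R.card : ℝ) ≤ 2 := by exact_mod_cast hR2
      rw [nsmul_eq_mul] at h1
      exact h1.trans (mul_le_mul_of_nonneg_right h2 (hnn 0 (by omega)))
    rw [Finset.sum_range_succ', ← Finset.sum_sdiff hRM]
    linarith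

/-- the first `k` edges of a greedy matching have at least half the
weight of any matching of size at most `k`. -/
theorem stmt_14 {V : Type*} [Fintype V] [DecidableEq V]
    (G : SimpleGraph V) (w : Sym2 V → ℝ)
    (hw : ∀ e ∈ G.edgeSet, 0 ≤ w e)
    (m : ℕ) (e : ℕ → Sym2 V)
    (hedges : ∀ j < m, e j ∈ G.edgeSet)
    (hdisj : ∀ j < m, ∀ k < m, j ≠ k → ∀ v, v ∈ e j → v ∉ e k)
    (hgreedy : ∀ j < m, ∀ f ∈ G.edgeSet,
      (∀ i < j, ∀ v, v ∈ e i → v ∉ f) → w f ≤ w (e j))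
    (hmaximal : ∀ f ∈ G.edgeSet, ∃ i < m, ∃ v, v ∈ e i ∧ v ∈ f)
    (k : ℕ) (hk1 : 1 ≤ k) (hkm : k ≤ m)
    (M : Finset (Sym2 V))
    (hM_sub : ∀ f ∈ M, f ∈ G.edgeSet)
    (hM_match : ∀ f ∈ M, ∀ g ∈ M, f ≠ g → ∀ v, v ∈ f → v ∉ g)
    (hM_card : M.card ≤ k) :
    1 / 2 * ∑ f ∈ M, w f ≤ ∑ i ∈ Finset.range k, w (e i) := by
  have h := sum_le_two_mul_sum_of_greedy w k e M
    (fun i hi => hw _ (hedges i (by omega)))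
    (fun j hj f hf => hgreedy j (by omega) f (hM_sub f hf)) hM_match hM_card
  linarith
end

section
/- If G contains a clique of size k (2 ≤ k ≤ n), then there exists a permutation π of U with OSD(π) ≥ θ_k; in fact, any permutation that places the k clique vertices in the first k positions satisfies this bound. -/
/-!
With uniform probability `p`, the prefix probability of length `i + 2` is `p ^ (i + 2)`, and every
term of `OSD` is nonnegative because `p` and `d` are. Truncating the sum to `i < k - 1` therefore
only decreases it. If the first `k` positions hold clique vertices, each surviving distance is
exactly `2`, so the truncated sum is `∑ 2 * (i + 1) * p ^ (i + 2)`, which is `θ_k` after reindexing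
(`theta_le_OSD`). An ordering that starts with the clique exists because an injection of the first
`k` positions into the `n` items extends to a bijection (`exists_isPermOn_initial`).
-/

open Finset

/-- Any `S ⊆ {0, …, n - 1}` can be listed first by some ordering of the `n` items. -/
lemma exists_isPermOn_initial (n : ℕ) (S : Finset ℕ) (hS : (S : Set ℕ) ⊆ Set.Iio n) :
    ∃ π : ℕ → ℕ, IsPermOn n π ∧ ∀ i < #S, π i ∈ S := by
  have hfin : {x | x ∈ S}.Finite := S.finite_toSet
  have hcard : #hfin.toFinset = #S := by
    congr 1
    ext x
    simp
  have hmem : ∀ i < #S, Nat.nth (· ∈ S) i ∈ S := fun i hi =>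
    Nat.nth_mem_of_lt_card hfin (by rwa [hcard])
  have hle : #S ≤ n := by
    have hsub : S ⊆ range n := fun x hx => mem_range.2 (hS hx)
    simpa using card_le_card hsub
  -- `i ↦ Nat.nth (· ∈ S) i` lists `S` on the positions below `#S`; extend it to a bijection.
  obtain ⟨g, hg⟩ := Finset.exists_equiv_extend_of_card_eq (α := Fin n) (t := range n)
    (by simp) (s := univ.filter fun i : Fin n => (i : ℕ) < #S)
    (f := fun i => Nat.nth (· ∈ S) i)
    (by
      intro x hx
      obtain ⟨i, hi, rfl⟩ := mem_image.1 hx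
      exact mem_range.2 (hS (hmem i (by simpa using hi))))
    (by
      intro a ha b hb hab
      have hinj := Nat.nth_injOn hfin
      rw [hcard] at hinj
      exact Fin.ext (hinj (by simpa using ha) (by simpa using hb) hab))
  refine ⟨fun i => if h : i < n then g ⟨i, h⟩ else i, ⟨?_, ?_, ?_⟩, ?_⟩
  · intro i hi
    have hi' : i < n := hi
    simpa [hi'] using mem_range.1 (g ⟨i, hi'⟩).2
  · intro a ha b hb hab
    have ha' : a < n := ha
    have hb' : b < n := hb
    simp only [ha', hb', dif_pos] at hab
    simpa using g.injective (Subtype.ext hab)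
  · intro y hy
    refine ⟨g.symm ⟨y, mem_range.2 hy⟩, (g.symm ⟨y, mem_range.2 hy⟩).2, ?_⟩
    simp
  · intro i hi
    have hin : i < n := hi.trans_le hle
    have h := hg ⟨i, hin⟩ (by simpa using hi)
    simp only [hin, dif_pos, h]
    exact hmem i hi

/-- Lower bound by the contribution of the first `k` positions, for any nonnegative `d` and `p`,
when the items there are at pairwise distance `2`. -/
lemma theta_le_OSD (n k : ℕ) (hkn : k ≤ n) (d : ℕ → ℕ → ℝ) (hd : ∀ u v, 0 ≤ d u v)
    (p : ℝ) (hp : 0 ≤ p) (π : ℕ → ℕ)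
    (h2 : ∀ i < k, ∀ t < i, d (π i) (π t) = 2) :
    2 * ∑ i ∈ Icc 1 (k - 1), (i : ℝ) * p ^ (i + 1) ≤ OSD n d (fun _ => p) π := by
  have hterm : ∀ i ∈ range (k - 1),
      p ^ (i + 2) * ∑ t ∈ range (i + 1), d (π (i + 1)) (π t)
        = 2 * (((i + 1 : ℕ) : ℝ) * p ^ (i + 1 + 1)) := by
    intro i hi
    rw [mem_range] at hi
    rw [sum_congr rfl fun t ht => h2 (i + 1) (by omega) t (mem_range.1 ht)]
    simp only [sum_const, card_range, nsmul_eq_mul]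
    ring
  have hIcc : Icc 1 (k - 1) = Ico 1 (k - 1 + 1) := by
    ext x
    simp only [mem_Icc, mem_Ico]
    omega
  calc 2 * ∑ i ∈ Icc 1 (k - 1), (i : ℝ) * p ^ (i + 1)
      = ∑ i ∈ range (k - 1), p ^ (i + 2) * ∑ t ∈ range (i + 1), d (π (i + 1)) (π t) := by
        rw [sum_congr rfl hterm, ← mul_sum, hIcc, sum_Ico_eq_sum_range]
        simp only [Nat.add_sub_cancel, Nat.add_comm 1]
    _ ≤ ∑ i ∈ range (n - 1), p ^ (i + 2) * ∑ t ∈ range (i + 1), d (π (i + 1)) (π t) :=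
        sum_le_sum_of_subset_of_nonneg (range_mono (by omega)) fun i _ _ =>
          mul_nonneg (pow_nonneg hp _) (sum_nonneg fun t _ => hd _ _)
    _ = OSD n d (fun _ => p) π := by simp [OSD, Pprefix]

/-- if `G` contains a clique of size `k`, then some permutation (indeed,
any permutation placing the clique first) achieves `OSD ≥ θ_k`. -/
theorem stmt_15 (n : ℕ) (hn : 2 ≤ n) (G : SimpleGraph ℕ) [DecidableRel G.Adj]
    (ε : ℝ) (hε0 : 0 < ε) (hε1 : ε < 1)
    (d : ℕ → ℕ → ℝ)
    (hd : ∀ u v, d u v = if G.Adj u v then 2 else if u = v then 0 else 1 + ε)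
    (p : ℝ) (hp : p = (1 - ε) / (2 * (n : ℝ) ^ 2))
    (k : ℕ) (hk2 : 2 ≤ k) (hkn : k ≤ n)
    (S : Finset ℕ) (hS : ↑S ⊆ Set.Iio n) (hclique : G.IsNClique k S) :
    (∃ π : ℕ → ℕ, IsPermOn n π ∧
        2 * ∑ i ∈ Finset.Icc 1 (k - 1), (i : ℝ) * p ^ (i + 1) ≤
          OSD n d (fun _ => p) π) ∧
      ∀ π : ℕ → ℕ, IsPermOn n π → (∀ i < k, π i ∈ S) →
        2 * ∑ i ∈ Finset.Icc 1 (k - 1), (i : ℝ) * p ^ (i + 1) ≤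
          OSD n d (fun _ => p) π := by
  have hd0 : ∀ u v, 0 ≤ d u v := by
    intro u v
    rw [hd]
    split_ifs <;> linarith
  have hp0 : 0 ≤ p := by
    rw [hp]
    exact div_nonneg (by linarith) (by positivity)
  have key : ∀ π : ℕ → ℕ, IsPermOn n π → (∀ i < k, π i ∈ S) →
      2 * ∑ i ∈ Finset.Icc 1 (k - 1), (i : ℝ) * p ^ (i + 1) ≤ OSD n d (fun _ => p) π := by
    intro π hπ hπS
    refine theta_le_OSD n k hkn d hd0 p hp0 π fun i hi t ht => ?_
    have hne : π i ≠ π t := fun h =>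
      ht.ne' (hπ.injOn (Set.mem_Iio.2 (by omega)) (Set.mem_Iio.2 (by omega)) h)
    rw [hd, if_pos (hclique.isClique (hπS i hi) (hπS t (ht.trans hi)) hne)]
  obtain ⟨π, hπ, hπS⟩ := exists_isPermOn_initial n S hS
  rw [hclique.card_eq] at hπS
  exact ⟨⟨π, hπ, key π hπ hπS⟩, key⟩
end

section
/- If G contains no clique of size k (2 ≤ k ≤ n), then every permutation π of U satisfies OSD(π) < θ_k. -/
/-!
Each summand of `OSD` with 0-based index `i` is `p ^ (i + 2)` times a sum of `i + 1` distances, hence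
at most `2 (i + 1) p ^ (i + 2)`, and `θ_k` is the sum of these maximal values over `i < k - 1`.
Since the first `k` items of `π` are not a clique, two of them are at distance `1 + ε`, so the
summands with `i < k - 1` lose at least `(1 - ε) p ^ k` against `θ_k` (`head_le`). The remaining
fewer than `n` summands are each at most `2 n p ^ (k + 1)`, so together they stay below
`2 n ^ 2 p ^ (k + 1) = (1 - ε) p ^ k` (`tail_lt`), and cannot make up for that loss.
-/

open Finset

/-- The first `k` items of a permutation are `k` distinct vertices, so without a `k`-clique two of
them are not adjacent. The pair is written as positions `t ≤ i` and `i + 1`, as in `OSD`. -/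
lemma exists_nonadj_pair {n k : ℕ} {G : SimpleGraph ℕ} (hkn : k ≤ n)
    (hnoclique : ∀ S : Finset ℕ, ↑S ⊆ Set.Iio n → ¬ G.IsNClique k S)
    {π : ℕ → ℕ} (hπ : IsPermOn n π) :
    ∃ i t, i + 1 < k ∧ t ≤ i ∧ ¬ G.Adj (π (i + 1)) (π t) ∧ π (i + 1) ≠ π t := by
  by_contra! hcon
  have hinj : Set.InjOn π (Finset.range k : Set ℕ) :=
    hπ.injOn.mono fun x hx => by
      simp only [coe_range, Set.mem_Iio] at hx ⊢
      omega
  have hadj : ∀ a b, a < b → b < k → G.Adj (π b) (π a) := by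
    intro a b hab hbk
    obtain ⟨i, rfl⟩ : ∃ i, b = i + 1 := ⟨b - 1, by omega⟩
    by_contra hna
    have h := hcon i a hbk (by omega) hna
    have := hinj (by simpa using hbk) (by simp; omega) h
    omega
  refine hnoclique ((Finset.range k).image π) ?_ ⟨?_, ?_⟩
  · intro x hx
    simp only [coe_image, coe_range, Set.mem_image, Set.mem_Iio] at hx
    obtain ⟨a, ha, rfl⟩ := hx
    exact hπ.mapsTo (show a < n by omega)
  · intro x hx y hy hxy
    simp only [coe_image, coe_range, Set.mem_image, Set.mem_Iio] at hx hy
    obtain ⟨a, ha, rfl⟩ := hx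
    obtain ⟨b, hb, rfl⟩ := hy
    rcases lt_trichotomy a b with h | h | h
    · exact (hadj a b h hb).symm
    · exact absurd (congrArg π h) hxy
    · exact hadj b a h ha
  · rw [Finset.card_image_of_injOn hinj, Finset.card_range]

/-- Summands bounded by `2 (i + 1) p ^ (i + 2)`, one of which has a coefficient smaller by
`1 - ε`, fall short of the maximal sum by at least `(1 - ε) p ^ k`. -/
lemma head_le {p ε : ℝ} {D : ℕ → ℝ} {k j : ℕ} (hp0 : 0 < p) (hp1 : p ≤ 1) (hε1 : ε < 1)
    (hD : ∀ i, D i ≤ 2 * (i + 1)) (hj : j + 1 < k) (hDj : D j ≤ 2 * (j + 1) - (1 - ε)) :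
    ∑ i ∈ Finset.range (k - 1), p ^ (i + 2) * D i ≤
      2 * ∑ i ∈ Finset.Icc 1 (k - 1), (i : ℝ) * p ^ (i + 1) - (1 - ε) * p ^ k := by
  have hre : 2 * ∑ i ∈ Finset.Icc 1 (k - 1), (i : ℝ) * p ^ (i + 1) =
      ∑ i ∈ Finset.range (k - 1), p ^ (i + 2) * (2 * (i + 1)) := by
    rw [← Finset.Ico_add_one_right_eq_Icc, Finset.sum_Ico_eq_sum_range, Finset.mul_sum]
    refine Finset.sum_congr (by simp) fun i _ => ?_
    push_cast
    ring
  have hloss : p ^ (j + 2) * (2 * (j + 1) - D j) ≤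
      ∑ i ∈ Finset.range (k - 1), p ^ (i + 2) * (2 * (i + 1) - D i) :=
    Finset.single_le_sum (f := fun i : ℕ => p ^ (i + 2) * (2 * (i + 1) - D i))
      (fun i _ => mul_nonneg (by positivity) (sub_nonneg.2 (hD i)))
      (Finset.mem_range.2 (by omega))
  have hpow : p ^ k ≤ p ^ (j + 2) := pow_le_pow_of_le_one hp0.le hp1 (by omega)
  have h1 : (1 - ε) * p ^ k ≤ p ^ (j + 2) * (2 * (j + 1) - D j) := by
    rw [mul_comm]
    exact mul_le_mul hpow (by linarith) (by linarith) (by positivity)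
  rw [hre]
  simp only [mul_sub (p ^ _), Finset.sum_sub_distrib] at hloss h1
  linarith

lemma tail_lt {p : ℝ} {D : ℕ → ℝ} {n k : ℕ} (hn : 0 < n) (hk : 0 < k) (hp0 : 0 < p)
    (hp1 : p ≤ 1) (hD : ∀ i, D i ≤ 2 * (i + 1)) :
    ∑ i ∈ Finset.Ico (k - 1) (n - 1), p ^ (i + 2) * D i < 2 * (n : ℝ) ^ 2 * p ^ (k + 1) := by
  have hterm : ∀ i ∈ Finset.Ico (k - 1) (n - 1),
      p ^ (i + 2) * D i ≤ p ^ (k + 1) * (2 * n) := by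
    intro i hi
    rw [Finset.mem_Ico] at hi
    have hin : (i : ℝ) + 1 ≤ n := by exact_mod_cast (by omega : i + 1 ≤ n)
    calc p ^ (i + 2) * D i ≤ p ^ (i + 2) * (2 * n) :=
          mul_le_mul_of_nonneg_left ((hD i).trans (by linarith)) (by positivity)
      _ ≤ p ^ (k + 1) * (2 * n) :=
          mul_le_mul_of_nonneg_right (pow_le_pow_of_le_one hp0.le hp1 (by omega)) (by positivity)
  have hcard : ((n - 1 - (k - 1) : ℕ) : ℝ) < n := by
    exact_mod_cast (by omega : n - 1 - (k - 1) < n)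
  have hn' : (0 : ℝ) < n := by exact_mod_cast hn
  calc ∑ i ∈ Finset.Ico (k - 1) (n - 1), p ^ (i + 2) * D i
      ≤ ((n - 1 - (k - 1) : ℕ) : ℝ) * (p ^ (k + 1) * (2 * n)) := by
        simpa using Finset.sum_le_card_nsmul _ _ _ hterm
    _ < n * (p ^ (k + 1) * (2 * n)) := mul_lt_mul_of_pos_right hcard (by positivity)
    _ = 2 * (n : ℝ) ^ 2 * p ^ (k + 1) := by ring

/-- if `G` contains no clique of size `k`, then every permutation
satisfies `OSD < θ_k`. -/
theorem stmt_16 (n : ℕ) (hn : 2 ≤ n) (G : SimpleGraph ℕ) [DecidableRel G.Adj]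
    (ε : ℝ) (hε0 : 0 < ε) (hε1 : ε < 1)
    (d : ℕ → ℕ → ℝ)
    (hd : ∀ u v, d u v = if G.Adj u v then 2 else if u = v then 0 else 1 + ε)
    (p : ℝ) (hp : p = (1 - ε) / (2 * (n : ℝ) ^ 2))
    (k : ℕ) (hk2 : 2 ≤ k) (hkn : k ≤ n)
    (hnoclique : ∀ S : Finset ℕ, ↑S ⊆ Set.Iio n → ¬ G.IsNClique k S) :
    ∀ π : ℕ → ℕ, IsPermOn n π →
      OSD n d (fun _ => p) π <
        2 * ∑ i ∈ Finset.Icc 1 (k - 1), (i : ℝ) * p ^ (i + 1) := by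
  intro π hπ
  have hn' : (2 : ℝ) ≤ n := by exact_mod_cast hn
  have hpn : 2 * (n : ℝ) ^ 2 * p = 1 - ε := by
    rw [hp]
    field_simp
  have hp0 : 0 < p := by
    rw [hp]
    exact div_pos (by linarith) (by positivity)
  have hp1 : p ≤ 1 := by nlinarith
  have hd2 : ∀ u v, d u v ≤ 2 := by
    intro u v
    rw [hd]
    split_ifs <;> linarith
  have hD : ∀ i : ℕ, ∑ t ∈ Finset.range (i + 1), d (π (i + 1)) (π t) ≤ 2 * (i + 1) := by
    intro i
    have h := Finset.sum_le_card_nsmul (Finset.range (i + 1))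
      (fun t => d (π (i + 1)) (π t)) 2 fun t _ => hd2 _ _
    simp only [Finset.card_range, nsmul_eq_mul] at h
    push_cast at h
    linarith
  obtain ⟨j, s, hjk, hsj, hna, hne⟩ := exists_nonadj_pair hkn hnoclique hπ
  have hDj : ∑ t ∈ Finset.range (j + 1), d (π (j + 1)) (π t) ≤ 2 * (j + 1) - (1 - ε) := by
    have h := Finset.single_le_sum (f := fun t => 2 - d (π (j + 1)) (π t))
      (fun t _ => sub_nonneg.2 (hd2 _ _)) (Finset.mem_range.2 (Nat.lt_succ_of_le hsj))
    have hds : d (π (j + 1)) (π s) = 1 + ε := by rw [hd, if_neg hna, if_neg hne]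
    simp only [Finset.sum_sub_distrib, Finset.sum_const, Finset.card_range, nsmul_eq_mul,
      hds] at h
    push_cast at h
    linarith
  have hhead := head_le hp0 hp1 hε1 hD hjk hDj
  have htail := tail_lt (n := n) (k := k) (by omega) (by omega) hp0 hp1 hD
  have hbal : 2 * (n : ℝ) ^ 2 * p ^ (k + 1) = (1 - ε) * p ^ k := by
    rw [← hpn]
    ring
  simp only [OSD, Pprefix, Finset.prod_const, Finset.card_range]
  rw [← Finset.sum_range_add_sum_Ico _ (show k - 1 ≤ n - 1 by omega)]
  linarith
end

section
/- Suppose 0 < p_i < 1 for every item i, and let π* be a permutation maximizing OSD over all permutations of U. Then for every 2 ≤ i ≤ n−1, (p_{π*(i)} / (1 − p_{π*(i)})) · Σ_{t=1}^{i−1} d(π*(i), π*(t)) ≥ (p_{π*(i+1)} / (1 − p_{π*(i+1)})) · Σ_{t=1}^{i−1} d(π*(i+1), π*(t)); that is, exchanging the items in positions i and i+1 of an optimal ordering cannot increase the objective, and this yields the stated weighted-distance inequality over the common prefix. -/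
/-!
Compare the optimal ordering `π` with the ordering obtained from it by exchanging the items in the
adjacent positions `i` and `i + 1`. A product or sum over the first `k` positions is unaffected by
the exchange unless `k = i + 1` (`prod_range_adjSwap`, `sum_range_adjSwap`), so only the two terms
of `OSD` belonging to the positions `i` and `i + 1` change.
Write `a`, `b` for the probabilities of the two items, `A`, `B` for their distance sums to the
common prefix, `P > 0` for the prefix probability and `δ` for their mutual distance. Then the two
terms add up to `P * (a * A + a * b * (B + δ))` before the exchange and to
`P * (b * B + a * b * (A + δ))` after it. Optimality gives `b * (1 - a) * B ≤ a * (1 - b) * A`, and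
dividing by `(1 - a) * (1 - b) > 0` gives the claim.
-/

open Finset

/-- The ordering `π` with the items in positions `i` and `i + 1` exchanged. -/
def adjSwap (π : ℕ → ℕ) (i : ℕ) : ℕ → ℕ := fun t => π (Equiv.swap i (i + 1) t)

lemma adjSwap_left (π : ℕ → ℕ) (i : ℕ) : adjSwap π i i = π (i + 1) := by
  simp [adjSwap]

lemma adjSwap_right (π : ℕ → ℕ) (i : ℕ) : adjSwap π i (i + 1) = π i := by
  simp [adjSwap]

lemma adjSwap_of_ne (π : ℕ → ℕ) {i t : ℕ} (h : t ≠ i) (h' : t ≠ i + 1) :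
    adjSwap π i t = π t := by
  simp [adjSwap, Equiv.swap_apply_of_ne_of_ne h h']

lemma isPermOn_adjSwap {n i : ℕ} {π : ℕ → ℕ} (hπ : IsPermOn n π) (hi : i + 1 < n) :
    IsPermOn n (adjSwap π i) := by
  have hmaps : Set.MapsTo (Equiv.swap i (i + 1)) (Set.Iio n) (Set.Iio n) := by
    intro t ht
    simp only [Set.mem_Iio] at ht ⊢
    rw [Equiv.swap_apply_def]
    split_ifs <;> omega
  refine Set.BijOn.comp hπ ⟨hmaps, (Equiv.injective _).injOn, fun t ht => ?_⟩
  exact ⟨_, hmaps ht, Equiv.swap_apply_self _ _ t⟩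

/-- The exchange permutes the first `k` positions unless it moves an item across their end. -/
lemma prod_range_adjSwap (π : ℕ → ℕ) {i k : ℕ} (hk : k ≠ i + 1) (f : ℕ → ℝ) :
    ∏ t ∈ range k, f (adjSwap π i t) = ∏ t ∈ range k, f (π t) := by
  rcases lt_or_gt_of_ne hk with h | h
  · refine prod_congr rfl fun t ht => ?_
    rw [mem_range] at ht
    rw [adjSwap_of_ne π (by omega) (by omega)]
  · refine Equiv.Perm.prod_comp (Equiv.swap i (i + 1)) (range k) (fun t => f (π t)) fun t ht => ?_
    rw [coe_range, Set.mem_Iio]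
    by_contra hlt
    exact ht (Equiv.swap_apply_of_ne_of_ne (by omega) (by omega))

/-- The additive counterpart of `prod_range_adjSwap`. -/
lemma sum_range_adjSwap (π : ℕ → ℕ) {i k : ℕ} (hk : k ≠ i + 1) (f : ℕ → ℝ) :
    ∑ t ∈ range k, f (adjSwap π i t) = ∑ t ∈ range k, f (π t) := by
  rcases lt_or_gt_of_ne hk with h | h
  · refine sum_congr rfl fun t ht => ?_
    rw [mem_range] at ht
    rw [adjSwap_of_ne π (by omega) (by omega)]
  · refine Equiv.Perm.sum_comp (Equiv.swap i (i + 1)) (range k) (fun t => f (π t)) fun t ht => ?_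
    rw [coe_range, Set.mem_Iio]
    by_contra hlt
    exact ht (Equiv.swap_apply_of_ne_of_ne (by omega) (by omega))

/-- The change of `OSD` when positions `m + 1` and `m + 2` are exchanged. The mutual distance of
the two exchanged items cancels by symmetry. -/
lemma OSD_sub_OSD_adjSwap {n m : ℕ} (hm : m + 1 < n - 1) (d : ℕ → ℕ → ℝ) (p : ℕ → ℝ)
    (π : ℕ → ℕ) (hsymm : d (π (m + 2)) (π (m + 1)) = d (π (m + 1)) (π (m + 2))) :
    OSD n d p π - OSD n d p (adjSwap π (m + 1)) =
      Pprefix p π (m + 1) *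
        (p (π (m + 1)) * (1 - p (π (m + 2))) * ∑ t ∈ range (m + 1), d (π (m + 1)) (π t) -
          p (π (m + 2)) * (1 - p (π (m + 1))) *
            ∑ t ∈ range (m + 1), d (π (m + 2)) (π t)) := by
  unfold OSD
  -- The summand with index `j` belongs to position `j + 1`.
  rw [← sum_sub_distrib, ← sum_subset (s₁ := {m, m + 1})]
  · rw [sum_pair (by omega)]
    have hR : adjSwap π (m + 1) (m + 2) = π (m + 1) := adjSwap_right π (m + 1)
    have hP : Pprefix p (adjSwap π (m + 1)) (m + 1) = Pprefix p π (m + 1) :=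
      prod_range_adjSwap π (by omega) p
    have hS (x : ℕ) : ∑ t ∈ range (m + 1), d x (adjSwap π (m + 1) t) =
        ∑ t ∈ range (m + 1), d x (π t) := sum_range_adjSwap π (by omega) (d x)
    have hsucc (ρ : ℕ → ℕ) (k : ℕ) : Pprefix p ρ (k + 1) = Pprefix p ρ k * p (ρ k) :=
      prod_range_succ _ _
    rw [show m + 1 + 2 = m + 2 + 1 from rfl, show m + 1 + 1 = m + 2 from rfl,
      hsucc π (m + 2), hsucc (adjSwap π (m + 1)) (m + 2),
      show m + 2 = m + 1 + 1 from rfl, hsucc π (m + 1), hsucc (adjSwap π (m + 1)) (m + 1),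
      sum_range_succ _ (m + 1), sum_range_succ _ (m + 1),
      adjSwap_left, adjSwap_right, hP, hS, hS, hsymm]
    ring
  · intro j hj
    simp only [mem_insert, mem_singleton] at hj
    rw [mem_range]
    omega
  · intro j _ hj
    simp only [mem_insert, mem_singleton, not_or] at hj
    have hP : Pprefix p (adjSwap π (m + 1)) (j + 2) = Pprefix p π (j + 2) :=
      prod_range_adjSwap π (by omega) p
    rw [hP, adjSwap_of_ne π (by omega) (by omega),
      sum_range_adjSwap π (by omega) (d (π (j + 1))), sub_self]

/-- the exchange inequality at an OSD-optimal ordering: for `2 ≤ i ≤ n−1`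
(here 0-based `i` with `1 ≤ i < n−1`),
`(p_{π*(i)}/(1−p_{π*(i)}))·Σ_{t=1}^{i−1} d(π*(i),π*(t)) ≥
 (p_{π*(i+1)}/(1−p_{π*(i+1)}))·Σ_{t=1}^{i−1} d(π*(i+1),π*(t))`. -/
theorem stmt_17 (n : ℕ) (hn : 2 ≤ n) (d : ℕ → ℕ → ℝ) (p : ℕ → ℝ)
    (hd_nonneg : ∀ u < n, ∀ v < n, 0 ≤ d u v)
    (hd_symm : ∀ u < n, ∀ v < n, d u v = d v u)
    (hd_diag : ∀ u < n, d u u = 0)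
    (hp : ∀ i < n, 0 < p i ∧ p i < 1)
    (π : ℕ → ℕ) (hπ : IsPermOn n π)
    (hopt : ∀ π', IsPermOn n π' → OSD n d p π' ≤ OSD n d p π) :
    ∀ i, 1 ≤ i → i < n - 1 →
      p (π (i + 1)) / (1 - p (π (i + 1))) *
          ∑ t ∈ Finset.range i, d (π (i + 1)) (π t) ≤
        p (π i) / (1 - p (π i)) * ∑ t ∈ Finset.range i, d (π i) (π t) := by
  intro i hi hin
  obtain ⟨m, rfl⟩ : ∃ m, i = m + 1 := ⟨i - 1, by omega⟩
  have hlt : ∀ t < n, π t < n := fun t ht => hπ.mapsTo ht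
  have ha := hp _ (hlt (m + 1) (by omega))
  have hb := hp _ (hlt (m + 2) (by omega))
  have hP : 0 < Pprefix p π (m + 1) :=
    prod_pos fun t ht => (hp _ (hlt t (by rw [mem_range] at ht; omega))).1
  have hdiff := OSD_sub_OSD_adjSwap hin d p π
    (hd_symm _ (hlt (m + 2) (by omega)) _ (hlt (m + 1) (by omega)))
  have hle := sub_nonneg.2 (hopt _ (isPermOn_adjSwap hπ (i := m + 1) (by omega)))
  rw [hdiff] at hle
  have key := nonneg_of_mul_nonneg_right hle hP
  rw [div_mul_eq_mul_div, div_mul_eq_mul_div,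
    div_le_div_iff₀ (sub_pos.2 hb.2) (sub_pos.2 ha.2)]
  linarith
end
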